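/- arXiv:1709.00159 — 3 statements merged into one kernel-verified Lean document; each statement's English description precedes it below -/
import Mathlib

section
/- Let p = (p₀,p₁,p₂;q₁,q₂) ∈ S(ℤ), and assume χ(x;p) := (x+q₁−p₀)(x+q₁−p₁)(x+q₁−p₂) + x(x+q₁)(x+q₁−q₂) ≥ 0 for all 0 ≤ x ≤ q₂ − q₁. Let a = (a₀,a₁,a₂;b₁,b₂) ∈ ℂ⁵ with Re s(a) > 0, a₀ ∉ ℤ≤0, b₁ − a₀ ∉ ℤ and b₂ − a₀ ∉ ℤ. Define g₃(n) := Σ_{k=(q₂−p₀)n}^{∞} φ(k;n), where φ(k;n) := Γ(k+p₀n+a₀)·Γ(k−(q₁−p₀)n+a₀−b₁+1)·Γ(k−(q₂−p₀)n+a₀−b₂+1) / (Γ(k+1)·Γ(k+(p₀−p₁)n+a₀−a₁+1)·Γ(k+(p₀−p₂)n+a₀−a₂+1)). Then there exist constants d₃ with 0 < d₃ < |D(p)|, C₃ > 0 and N₃ ∈ ℕ such that |t(a) · g₃(n)| ≤ C₃ · d₃ⁿ for all n ≥ N₃. -/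
/-!
Put `k = (q₂ - p₀) n + j` and `A = q₂`, `B = q₂ - q₁`, `cᵢ = q₂ - pᵢ`, so that
`A + B = c₀ + c₁ + c₂`. Every Gamma argument is then a natural number `j + α n` plus a fixed complex
constant, and `Γ(m + a)` is comparable with `(m + 1) ^ (Re a - 1) * m!` (`exists_norm_Gamma_le`,
`exists_norm_inv_Gamma_le`, from Euler's limit formula). Hence `φ` is bounded by a power of `n + 1`,
times `(j + 1) ^ (-Re s(a) - 1)`, times the factorial ratio
`R(j) = (j + A n)! (j + B n)! j! / ∏ (j + cᵢ n)!`. The power of `j + 1` is summable because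
`Re s(a) > 0`. The inequality `e₂(p) > q₁ q₂` (`esymm_sub_pos`) makes `R` antitone in `j`, so
`R(j) ≤ R(0)`, which by Stirling's bounds is at most a power of `n + 1` times `exp(n f₀)`, where
`f₀ = A log A + B log B - ∑ cᵢ log cᵢ` (`factorial_ratio_le_exp`, `exists_norm_tsum_le`).

It remains to see that `exp f₀ < |D(p)|` (`phase_end_lt`). Let `F` be the function `phase` below,
the exponential rate of `|φ|`. Then `F (q₂ - q₁) = f₀`, and
`F' = log |(x + q₁) x (x + q₁ - q₂)| - log |∏ (x + q₁ - pᵢ)|`. By the balancing condition the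
difference of the two cubics is affine in `x`; its zero `x₀` lies in `(-(q₁ - p₀), 0)`, and
`exp (F x₀) = |D(p)|` (`phase_critical`, `abs_Dval`). On `[x₀, 0]` the affine function has a constant
sign, so `F` strictly decreases; on `[0, q₂ - q₁]` the hypothesis `χ ≥ 0` says exactly that `F' ≤ 0`.
Thus `f₀ = F (q₂ - q₁) ≤ F 0 < F x₀ = log |D(p)|`, and any `d₃` strictly between the exponentials
of the two ends absorbs the power of `n + 1`.
-/

open Complex

/-- `D(p) = (−1)^{q₁+q₂} p₀^{p₀}p₁^{p₁}p₂^{p₂} / ∏_{i,j}(q_j−p_i)^{q_j−p_i}`. -/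
noncomputable def Dval (p0 p1 p2 q1 q2 : ℤ) : ℝ :=
  (-1 : ℝ) ^ (q1 + q2) *
    ((p0 : ℝ) ^ (p0 : ℝ) * (p1 : ℝ) ^ (p1 : ℝ) * (p2 : ℝ) ^ (p2 : ℝ)) /
    (((q1 - p0 : ℤ) : ℝ) ^ ((q1 - p0 : ℤ) : ℝ) * ((q1 - p1 : ℤ) : ℝ) ^ ((q1 - p1 : ℤ) : ℝ) *
      ((q1 - p2 : ℤ) : ℝ) ^ ((q1 - p2 : ℤ) : ℝ) * ((q2 - p0 : ℤ) : ℝ) ^ ((q2 - p0 : ℤ) : ℝ) *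
      ((q2 - p1 : ℤ) : ℝ) ^ ((q2 - p1 : ℤ) : ℝ) * ((q2 - p2 : ℤ) : ℝ) ^ ((q2 - p2 : ℤ) : ℝ))

/-- `t(a) = sin π(b₁−a₀) · sin π(b₂−a₀)`. -/
noncomputable def tval (a0 b1 b2 : ℂ) : ℂ :=
  Complex.sin (Real.pi * (b1 - a0)) * Complex.sin (Real.pi * (b2 - a0))

/-- The summand `φ(k;n)` of the decomposition of `₃g₂(a+np)`. -/
noncomputable def phiSummand (a0 a1 a2 b1 b2 : ℂ) (p0 p1 p2 q1 q2 : ℤ) (k n : ℕ) : ℂ :=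
  (Gamma ((k : ℂ) + (p0 : ℂ) * n + a0) *
      Gamma ((k : ℂ) - ((q1 - p0 : ℤ) : ℂ) * n + a0 - b1 + 1) *
      Gamma ((k : ℂ) - ((q2 - p0 : ℤ) : ℂ) * n + a0 - b2 + 1)) /
    (Gamma ((k : ℂ) + 1) *
      Gamma ((k : ℂ) + ((p0 - p1 : ℤ) : ℂ) * n + a0 - a1 + 1) *
      Gamma ((k : ℂ) + ((p0 - p2 : ℤ) : ℂ) * n + a0 - a2 + 1))


/-! ### The exponential rate and its comparison with `|D(p)|` -/

theorem hasDerivAt_mul_log_add {x : ℝ} (c : ℝ) (hx : x + c ≠ 0) :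
    HasDerivAt (fun x ↦ (x + c) * Real.log (x + c)) (Real.log (x + c) + 1) x :=
  HasDerivAt.comp_add_const x c (Real.hasDerivAt_mul_log hx)

/-- The exponential growth rate of `|φ(k; n)|` along `k = (x + q₁ - p₀) n`, as a function of `x`.
As `Real.log u = log |u|`, this also covers the ranges of `x` where some arguments of the Gamma
functions are negative; the summand `x + 0` keeps the six terms in the form
`(x + c) * log (x + c)`. -/
noncomputable def phase (p0 p1 p2 q1 q2 x : ℝ) : ℝ :=
  (x + q1) * Real.log (x + q1) + (x + 0) * Real.log (x + 0)
    + (x + (q1 - q2)) * Real.log (x + (q1 - q2))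
    - (x + (q1 - p0)) * Real.log (x + (q1 - p0)) - (x + (q1 - p1)) * Real.log (x + (q1 - p1))
    - (x + (q1 - p2)) * Real.log (x + (q1 - p2))

theorem continuous_phase (p0 p1 p2 q1 q2 : ℝ) : Continuous (phase p0 p1 p2 q1 q2) := by
  have h (c : ℝ) : Continuous fun x : ℝ ↦ (x + c) * Real.log (x + c) :=
    Real.continuous_mul_log.comp (continuous_id.add continuous_const)
  unfold phase
  exact (((((h _).add (h _)).add (h _)).sub (h _)).sub (h _)).sub (h _)

theorem hasDerivAt_phase {p0 p1 p2 q1 q2 x : ℝ} (h1 : x + q1 ≠ 0) (h2 : x ≠ 0)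
    (h3 : x + (q1 - q2) ≠ 0) (h4 : x + (q1 - p0) ≠ 0) (h5 : x + (q1 - p1) ≠ 0)
    (h6 : x + (q1 - p2) ≠ 0) :
    HasDerivAt (phase p0 p1 p2 q1 q2)
      (Real.log ((x + q1) * x * (x + (q1 - q2))) -
        Real.log ((x + (q1 - p0)) * (x + (q1 - p1)) * (x + (q1 - p2)))) x := by
  have h2' : x + 0 ≠ 0 := by simpa using h2
  have := ((((((hasDerivAt_mul_log_add _ h1).add (hasDerivAt_mul_log_add _ h2')).add
    (hasDerivAt_mul_log_add _ h3)).sub (hasDerivAt_mul_log_add _ h4)).sub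
    (hasDerivAt_mul_log_add _ h5)).sub (hasDerivAt_mul_log_add _ h6))
  rw [Real.log_mul (mul_ne_zero h1 h2) h3, Real.log_mul h1 h2,
    Real.log_mul (mul_ne_zero h4 h5) h6, Real.log_mul h4 h5]
  refine this.congr_deriv ?_
  rw [add_zero]
  ring

/-- `q₁ q₂ < e₂(p)`. Since `q₁ q₂ ≤ (p₀ + p₁ + p₂)² / 4`, this reduces to
`(p₁ + p₂ - p₀)² < 4 p₁ p₂`, which holds because `0 < p₁ + p₂ - p₀ ≤ min p₁ p₂`. -/
theorem esymm_sub_pos {p0 p1 p2 q1 q2 : ℝ} (hbal : q1 + q2 = p0 + p1 + p2)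
    (h1 : p1 ≤ p0) (h2 : p2 ≤ p0) (h3 : p0 < q1) (h4 : q1 ≤ q2) (h5 : q2 < p1 + p2) :
    0 < p0 * p1 + p0 * p2 + p1 * p2 - q1 * q2 := by
  have hp1 : 0 < p1 := by linarith
  have hp2 : 0 < p2 := by linarith
  have hd : 0 < p1 + p2 - p0 := by linarith [h5]
  have e1 : 0 ≤ p0 - p1 := by linarith
  have e2 : 0 ≤ p0 - p2 := by linarith
  have hlt : (p1 + p2 - p0) ^ 2 < 4 * (p1 * p2) := by
    nlinarith [mul_nonneg hd.le e1, mul_nonneg hd.le e2, mul_nonneg hp1.le e1,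
      mul_nonneg hp1.le e2, mul_pos hp1 hp2]
  have : q2 = p0 + p1 + p2 - q1 := by linarith
  nlinarith [sq_nonneg (q1 - q2)]

/-- The value of `phase` at its explicit critical point is `log |D(p)|`. At this point each of the
six linear factors is, up to sign, a product of three of the numbers `pᵢ`, `qⱼ - pᵢ` divided
by `w`. -/
theorem phase_critical {p0 p1 p2 q1 q2 w : ℝ} (hbal : q1 + q2 = p0 + p1 + p2)
    (h0 : 0 < p0) (h1 : 0 < p1) (h2 : 0 < p2)
    (h10 : 0 < q1 - p0) (h11 : 0 < q1 - p1) (h12 : 0 < q1 - p2)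
    (h20 : 0 < q2 - p0) (h21 : 0 < q2 - p1) (h22 : 0 < q2 - p2)
    (hw : 0 < w) (hwd : w = p0 * p1 + p0 * p2 + p1 * p2 - q1 * q2) :
    phase p0 p1 p2 q1 q2 (-((q1 - p0) * (q1 - p1) * (q1 - p2) / w)) =
      p0 * Real.log p0 + p1 * Real.log p1 + p2 * Real.log p2
      - (q1 - p0) * Real.log (q1 - p0) - (q1 - p1) * Real.log (q1 - p1)
      - (q1 - p2) * Real.log (q1 - p2)
      - (q2 - p0) * Real.log (q2 - p0) - (q2 - p1) * Real.log (q2 - p1)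
      - (q2 - p2) * Real.log (q2 - p2) := by
  have key {v c : ℝ} (a b d : ℝ) (ha : 0 < a) (hb : 0 < b) (hd : 0 < d)
      (h : v + c = a * b * d / w ∨ v + c = -(a * b * d / w)) :
      Real.log (v + c) = Real.log a + Real.log b + Real.log d - Real.log w := by
    have : Real.log (a * b * d / w) = Real.log a + Real.log b + Real.log d - Real.log w := by
      rw [Real.log_div (by positivity) hw.ne', Real.log_mul (by positivity) hd.ne',
        Real.log_mul ha.ne' hb.ne']
    rcases h with h | h
    · rw [h, this]
    · rw [h, Real.log_neg_eq_log, this]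
  have hq : q2 = p0 + p1 + p2 - q1 := by linarith
  set x := -((q1 - p0) * (q1 - p1) * (q1 - p2) / w) with hx
  have l1 : Real.log (x + q1) = _ := key p0 p1 p2 h0 h1 h2 (Or.inl (by
    rw [hx]; field_simp; rw [hwd, hq]; ring))
  have l2 : Real.log (x + 0) = _ := key _ _ _ h10 h11 h12 (Or.inr (by
    rw [hx]; ring))
  have l3 : Real.log (x + (q1 - q2)) = _ := key _ _ _ h20 h21 h22 (Or.inr (by
    rw [hx]; field_simp; rw [hwd, hq]; ring))
  have l4 : Real.log (x + (q1 - p0)) = _ := key _ _ _ h0 h10 h20 (Or.inl (by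
    rw [hx]; field_simp; rw [hwd, hq]; ring))
  have l5 : Real.log (x + (q1 - p1)) = _ := key _ _ _ h1 h11 h21 (Or.inl (by
    rw [hx]; field_simp; rw [hwd, hq]; ring))
  have l6 : Real.log (x + (q1 - p2)) = _ := key _ _ _ h2 h12 h22 (Or.inl (by
    rw [hx]; field_simp; rw [hwd, hq]; ring))
  rw [phase, l1, l2, l3, l4, l5, l6]
  clear_value x
  linear_combination Real.log w * hbal

/-- The rate at `x = q₂ - q₁`, where the range of summation of `g₃` starts, is strictly smaller
than `log |D(p)|`. -/
theorem phase_end_lt {p0 p1 p2 q1 q2 : ℝ} (hbal : q1 + q2 = p0 + p1 + p2)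
    (h1 : p1 ≤ p0) (h2 : p2 ≤ p0) (h3 : p0 < q1) (h4 : q1 ≤ q2) (h5 : q2 < p1 + p2)
    (hchi : ∀ x : ℝ, 0 ≤ x → x ≤ q2 - q1 →
      0 ≤ (x + q1 - p0) * (x + q1 - p1) * (x + q1 - p2) + x * (x + q1) * (x + q1 - q2)) :
    q2 * Real.log q2 + (q2 - q1) * Real.log (q2 - q1) - (q2 - p0) * Real.log (q2 - p0)
        - (q2 - p1) * Real.log (q2 - p1) - (q2 - p2) * Real.log (q2 - p2) <
      p0 * Real.log p0 + p1 * Real.log p1 + p2 * Real.log p2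
      - (q1 - p0) * Real.log (q1 - p0) - (q1 - p1) * Real.log (q1 - p1)
      - (q1 - p2) * Real.log (q1 - p2)
      - (q2 - p0) * Real.log (q2 - p0) - (q2 - p1) * Real.log (q2 - p1)
      - (q2 - p2) * Real.log (q2 - p2) := by
  have hp1 : 0 < p1 := by linarith
  have hp2 : 0 < p2 := by linarith
  have hp0 : 0 < p0 := by linarith
  have h10 : 0 < q1 - p0 := by linarith
  have h11 : 0 < q1 - p1 := by linarith
  have h12 : 0 < q1 - p2 := by linarith
  have h20 : 0 < q2 - p0 := by linarith
  have h21 : 0 < q2 - p1 := by linarith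
  have h22 : 0 < q2 - p2 := by linarith
  have hq : q2 = p0 + p1 + p2 - q1 := by linarith
  obtain ⟨w, hwd⟩ : ∃ w, w = p0 * p1 + p0 * p2 + p1 * p2 - q1 * q2 := ⟨_, rfl⟩
  have hw : 0 < w := hwd ▸ esymm_sub_pos hbal h1 h2 h3 h4 h5
  rw [← phase_critical hbal hp0 hp1 hp2 h10 h11 h12 h20 h21 h22 hw hwd]
  have hend : phase p0 p1 p2 q1 q2 (q2 - q1) =
      q2 * Real.log q2 + (q2 - q1) * Real.log (q2 - q1) - (q2 - p0) * Real.log (q2 - p0)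
        - (q2 - p1) * Real.log (q2 - p1) - (q2 - p2) * Real.log (q2 - p2) := by
    rw [phase]
    simp only [sub_add_cancel, add_zero, sub_add_sub_cancel, sub_self, zero_mul]
  rw [← hend]
  set x0 := -((q1 - p0) * (q1 - p1) * (q1 - p2) / w) with hx0
  have hx0neg : x0 < 0 := by rw [hx0, neg_lt_zero]; positivity
  have hx0q : x0 + (q1 - p0) = p0 * (q1 - p0) * (q2 - p0) / w := by
    rw [hx0]; field_simp; rw [hwd, hq]; ring
  have hx0pos : 0 < x0 + (q1 - p0) := by rw [hx0q]; positivity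
  have hid (x : ℝ) : (x + (q1 - p0)) * (x + (q1 - p1)) * (x + (q1 - p2))
      - (x + q1) * x * (x + (q1 - q2)) = w * (x - x0) := by
    rw [hx0, sub_neg_eq_add, mul_add w, mul_div_cancel₀ _ hw.ne', hwd, hq]; ring
  -- `hchi` says that the first cubic in the derivative of `phase` is at most the second in absolute
  -- value.
  have hmid : phase p0 p1 p2 q1 q2 (q2 - q1) ≤ phase p0 p1 p2 q1 q2 0 := by
    have hd {x : ℝ} (hx : x ∈ interior (Set.Icc 0 (q2 - q1))) :=
      hasDerivAt_phase (p0 := p0) (p1 := p1) (p2 := p2) (q1 := q1) (q2 := q2) (x := x)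
        (by rw [interior_Icc] at hx; linarith [hx.1])
        (by rw [interior_Icc] at hx; exact hx.1.ne')
        (by rw [interior_Icc] at hx; linarith [hx.2])
        (by rw [interior_Icc] at hx; linarith [hx.1])
        (by rw [interior_Icc] at hx; linarith [hx.1])
        (by rw [interior_Icc] at hx; linarith [hx.1])
    refine antitoneOn_of_deriv_nonpos (convex_Icc 0 (q2 - q1))
      (continuous_phase ..).continuousOn
      (fun x hx ↦ (hd hx).differentiableAt.differentiableWithinAt) ?_
      ⟨le_rfl, by linarith⟩ ⟨by linarith, le_rfl⟩ (by linarith)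
    intro x hx
    rw [(hd hx).deriv, sub_nonpos]
    rw [interior_Icc] at hx
    obtain ⟨ha, hb⟩ := hx
    have hneg : (x + q1) * x * (x + (q1 - q2)) < 0 :=
      mul_neg_of_pos_of_neg (mul_pos (by linarith) ha) (by linarith)
    rw [← Real.log_neg_eq_log]
    exact Real.log_le_log (by linarith) (by linarith [hchi x ha.le hb.le])
  have hleft : phase p0 p1 p2 q1 q2 0 < phase p0 p1 p2 q1 q2 x0 := by
    refine strictAntiOn_of_deriv_neg (convex_Icc x0 0)
      (continuous_phase ..).continuousOn ?_ ⟨le_rfl, hx0neg.le⟩ ⟨hx0neg.le, le_rfl⟩ hx0neg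
    intro x hx
    rw [interior_Icc] at hx
    obtain ⟨ha, hb⟩ := hx
    have u1 : 0 < x + (q1 - p0) := by linarith
    have u2 : 0 < x + (q1 - p1) := by linarith
    have u3 : 0 < x + (q1 - p2) := by linarith
    rw [(hasDerivAt_phase (by linarith) hb.ne (by linarith) u1.ne' u2.ne' u3.ne').deriv, sub_neg]
    apply Real.log_lt_log
    · exact mul_pos_of_neg_of_neg (mul_neg_of_pos_of_neg (by linarith) hb) (by linarith)
    · have := hid x
      have := mul_pos hw (sub_pos.2 ha)
      linarith
  linarith

/-! ### Growth of `Γ(m + a)` for natural `m` -/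

theorem Gamma_add_nat_succ {s : ℂ} (hs : 0 < s.re) (n : ℕ) :
    Gamma (s + (n + 1 : ℕ)) = (∏ j ∈ Finset.range (n + 1), (s + j)) * Gamma s := by
  induction n with
  | zero => simp [Gamma_add_one s (by rintro rfl; simp at hs)]
  | succ n ih =>
    have hne : s + (n + 1 : ℕ) ≠ 0 := by
      intro h
      have := congrArg re h
      simp at this
      linarith [Nat.cast_nonneg (α := ℝ) n]
    rw [Finset.prod_range_succ, Nat.cast_succ (n + 1), ← add_assoc, Gamma_add_one _ hne, ih]
    ring

open Filter Topology in
/-- `|Γ(s + n + 1)| ~ (n + 1) ^ (Re s) * n!`: Euler's limit formula for `Γ(s)`. -/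
theorem tendsto_norm_Gamma_add_nat {s : ℂ} (hs : 0 < s.re) :
    Tendsto (fun n : ℕ ↦ ‖Gamma (s + (n + 1 : ℕ))‖ / (((n : ℝ) + 1) ^ s.re * n.factorial))
      atTop (𝓝 1) := by
  have hG : ‖Gamma s‖ ≠ 0 := norm_ne_zero_iff.2 (Gamma_ne_zero_of_re_pos hs)
  have h1 : Tendsto (fun n : ℕ ↦ ‖Gamma s‖ / ‖GammaSeq s n‖) atTop (𝓝 1) := by
    have := (tendsto_const_nhds (x := ‖Gamma s‖)).div (GammaSeq_tendsto_Gamma s).norm hG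
    rwa [div_self hG] at this
  have h2 : Tendsto (fun n : ℕ ↦ ((n : ℝ) / (n + 1)) ^ s.re) atTop (𝓝 1) := by
    simpa using (tendsto_natCast_div_add_atTop (1 : ℝ)).rpow_const
      (p := s.re) (Or.inl one_ne_zero)
  have h3 := h1.mul h2
  rw [one_mul] at h3
  refine h3.congr' ?_
  filter_upwards [eventually_gt_atTop 0] with n hn
  have hn' : (0 : ℝ) < n := by exact_mod_cast hn
  rw [Gamma_add_nat_succ hs, GammaSeq, norm_mul, norm_div, norm_mul, Complex.norm_natCast,
    norm_natCast_cpow_of_pos hn, Real.div_rpow hn'.le (by positivity)]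
  have : ‖∏ j ∈ Finset.range (n + 1), (s + (j : ℂ))‖ ≠ 0 := by
    rw [norm_ne_zero_iff, Finset.prod_ne_zero_iff]
    intro j _ h
    have := congrArg re h
    simp at this
    linarith [Nat.cast_nonneg (α := ℝ) j]
  have e1 : (n : ℝ) ^ s.re ≠ 0 := by positivity
  have e2 : ((n : ℝ) + 1) ^ s.re ≠ 0 := by positivity
  have e3 : (n.factorial : ℝ) ≠ 0 := by positivity
  field_simp

/-- Induction for properties of Gamma functions: prove them for `Re a > 1`, then descend
by unit steps. -/
theorem shift_induction (P : ℂ → Prop) (base : ∀ a : ℂ, 1 < a.re → P a)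
    (step : ∀ a : ℂ, P (a + 1) → P a) (a : ℂ) : P a := by
  have h : ∀ (N : ℕ) (a : ℂ), 1 < (a + N).re → P a := by
    intro N
    induction N with
    | zero => intro a ha; exact base a (by simpa using ha)
    | succ N ih =>
      intro a ha
      refine step a (ih _ ?_)
      have : a + 1 + (N : ℂ) = a + (N + 1 : ℕ) := by push_cast; ring
      rwa [this]
  obtain ⟨N, hN⟩ := exists_nat_gt (1 - a.re)
  exact h N a (by simp; linarith)

open Filter Topology in
/-- Valid for every `a`, because the value of `Gamma` at its poles is `0`. -/
theorem exists_norm_Gamma_le (a : ℂ) :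
    ∃ C : ℝ, 0 < C ∧ ∀ m : ℕ,
      ‖Gamma (m + a)‖ ≤ C * (((m : ℝ) + 1) ^ (a.re - 1) * m.factorial) := by
  induction a using shift_induction with
  | base a ha =>
    obtain ⟨C, hC⟩ := (tendsto_norm_Gamma_add_nat (s := a - 1) (by simpa using ha)).bddAbove_range
    refine ⟨max C 1, by positivity, fun m ↦ ?_⟩
    have h := (hC (Set.mem_range_self m)).trans (le_max_left C 1)
    have hc : a - 1 + ((m + 1 : ℕ) : ℂ) = m + a := by push_cast; ring
    simp only [hc] at h
    rwa [div_le_iff₀ (by positivity), sub_re, one_re] at h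
  | step a ih =>
    obtain ⟨C, hC0, hC⟩ := ih
    have hc : ∃ c : ℝ, 0 < c ∧ ∀ m : ℕ, (m : ℂ) + a ≠ 0 → c * (m + 1) ≤ ‖(m : ℂ) + a‖ := by
      have ht : Tendsto (fun m : ℕ ↦ ‖1 + (a - 1) * (1 / ((m : ℂ) + 1))‖⁻¹) atTop (𝓝 1) := by
        have := (((tendsto_one_div_add_atTop_nhds_zero_nat (𝕜 := ℂ)).const_mul
          (a - 1)).const_add 1).norm.inv₀ (by simp)
        simpa using this
      obtain ⟨D, hD⟩ := ht.bddAbove_range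
      refine ⟨(max D 1)⁻¹, by positivity, fun m hm ↦ ?_⟩
      have h := (hD (Set.mem_range_self m)).trans (le_max_left D 1)
      have hm1 : (m : ℂ) + 1 ≠ 0 := by exact_mod_cast m.succ_ne_zero
      have he : 1 + (a - 1) * (1 / ((m : ℂ) + 1)) = (m + a) / ((m + 1 : ℕ) : ℂ) := by
        push_cast; field_simp; ring
      simp only [he, norm_div, Complex.norm_natCast, inv_div] at h
      rw [div_le_iff₀ (norm_pos_iff.2 hm)] at h
      rw [inv_mul_le_iff₀ (by positivity)]
      exact_mod_cast h
    obtain ⟨c, hc0, hc⟩ := hc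
    refine ⟨C / c, by positivity, fun m ↦ ?_⟩
    by_cases h0 : (m : ℂ) + a = 0
    · rw [h0, Gamma_zero, norm_zero]; positivity
    have h1 := hC m
    rw [← add_assoc, Gamma_add_one _ h0, norm_mul, add_re, one_re, add_sub_cancel_right] at h1
    have hm : (0 : ℝ) < m + 1 := by positivity
    have h2 : ((m : ℝ) + 1) ^ a.re = (m + 1) ^ (a.re - 1) * (m + 1) := by
      rw [← Real.rpow_add_one hm.ne', sub_add_cancel]
    have h3 := (mul_le_mul_of_nonneg_right (hc m h0) (norm_nonneg (Gamma (m + a)))).trans h1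
    rw [h2] at h3
    rw [div_mul_eq_mul_div, le_div_iff₀ hc0]
    refine le_of_mul_le_mul_right ?_ hm
    linarith

/-- Valid for every `a`, because `1 / Γ` vanishes at the poles of `Γ`. -/
theorem exists_norm_inv_Gamma_le (a : ℂ) :
    ∃ C : ℝ, 0 < C ∧ ∀ m : ℕ,
      ‖(Gamma (m + a))⁻¹‖ ≤ C * (((m : ℝ) + 1) ^ (1 - a.re) * (m.factorial : ℝ)⁻¹) := by
  induction a using shift_induction with
  | base a ha =>
    have ht := (tendsto_norm_Gamma_add_nat (s := a - 1) (by simpa using ha)).inv₀ one_ne_zero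
    obtain ⟨C, hC⟩ := ht.bddAbove_range
    refine ⟨max C 1, by positivity, fun m ↦ ?_⟩
    have h := (hC (Set.mem_range_self m)).trans (le_max_left C 1)
    have hc : a - 1 + ((m + 1 : ℕ) : ℂ) = m + a := by push_cast; ring
    simp only [hc] at h
    rw [inv_div, sub_re, one_re, div_eq_mul_inv, ← norm_inv, mul_comm,
      ← le_div_iff₀ (by positivity)] at h
    refine h.trans_eq ?_
    rw [div_eq_mul_inv, mul_inv, ← Real.rpow_neg (by positivity), neg_sub]
  | step a ih =>
    obtain ⟨C, hC0, hC⟩ := ih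
    refine ⟨C * (1 + ‖a‖), by positivity, fun m ↦ ?_⟩
    have hm : (0 : ℝ) < m + 1 := by positivity
    have h1 := hC m
    have h2 : ((m : ℝ) + 1) ^ (1 - a.re) = (m + 1) ^ (1 - (a + 1).re) * (m + 1) := by
      rw [← Real.rpow_add_one hm.ne']; congr 1; simp; ring
    have h3 : ‖(m : ℂ) + a‖ ≤ (1 + ‖a‖) * (m + 1) := by
      refine (norm_add_le _ _).trans ?_
      rw [Complex.norm_natCast]
      nlinarith [norm_nonneg a, Nat.cast_nonneg (α := ℝ) m,
        mul_nonneg (norm_nonneg a) (Nat.cast_nonneg (α := ℝ) m)]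
    have h4 := one_div_Gamma_eq_self_mul_one_div_Gamma_add_one (m + a)
    rw [h4, norm_mul, h2, add_assoc (m : ℂ) a 1]
    calc _ ≤ ((1 + ‖a‖) * (m + 1)) * _ := mul_le_mul h3 h1 (norm_nonneg _) (by positivity)
      _ = _ := by ring

/-- From `j + 1 ≤ j + α n + 1 ≤ (α + 1) (n + 1) (j + 1)`, for exponents of either sign. -/
theorem shifted_rpow_le (e : ℝ) (α j n : ℕ) :
    (((j + α * n : ℕ) : ℝ) + 1) ^ e ≤
      ((α : ℝ) + 1) ^ |e| * ((n : ℝ) + 1) ^ |e| * ((j : ℝ) + 1) ^ e := by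
  have hj : (0 : ℝ) < j + 1 := by positivity
  have hlo : (j : ℝ) + 1 ≤ ((j + α * n : ℕ) : ℝ) + 1 := by
    push_cast
    nlinarith [mul_nonneg (Nat.cast_nonneg (α := ℝ) α) (Nat.cast_nonneg (α := ℝ) n)]
  have hpos : (0 : ℝ) < ((j + α * n : ℕ) : ℝ) + 1 := hj.trans_le hlo
  have hone : (1 : ℝ) ≤ ((α : ℝ) + 1) * (n + 1) := by
    exact_mod_cast Nat.mul_pos α.succ_pos n.succ_pos
  rw [← Real.mul_rpow (by positivity) (by positivity)]
  rcases le_total 0 e with he | he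
  · rw [abs_of_nonneg he, ← Real.mul_rpow (by positivity) hj.le]
    refine Real.rpow_le_rpow hpos.le ?_ he
    have : j + α * n + 1 ≤ (α + 1) * (n + 1) * (j + 1) := by nlinarith [Nat.zero_le (α * n * j)]
    exact_mod_cast this
  · exact (Real.rpow_le_rpow_of_nonpos hj hlo he).trans
      (le_mul_of_one_le_left (by positivity) (Real.one_le_rpow hone (abs_nonneg e)))

theorem exists_norm_Gamma_shift_le (a : ℂ) (α : ℕ) :
    ∃ C E : ℝ, 0 < C ∧ ∀ j n : ℕ,
      ‖Gamma ((j + α * n : ℕ) + a)‖ ≤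
        C * (((n : ℝ) + 1) ^ E * ((j : ℝ) + 1) ^ (a.re - 1) * (j + α * n).factorial) := by
  obtain ⟨C, hC0, hC⟩ := exists_norm_Gamma_le a
  refine ⟨C * ((α : ℝ) + 1) ^ |a.re - 1|, |a.re - 1|, by positivity, fun j n ↦ ?_⟩
  calc _ ≤ _ := hC _
    _ ≤ C * ((((α : ℝ) + 1) ^ |a.re - 1| * ((n : ℝ) + 1) ^ |a.re - 1| *
          ((j : ℝ) + 1) ^ (a.re - 1)) * _) := by gcongr; exact shifted_rpow_le _ α j n
    _ = _ := by ring

theorem exists_norm_inv_Gamma_shift_le (a : ℂ) (α : ℕ) :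
    ∃ C E : ℝ, 0 < C ∧ ∀ j n : ℕ,
      ‖(Gamma ((j + α * n : ℕ) + a))⁻¹‖ ≤
        C * (((n : ℝ) + 1) ^ E * ((j : ℝ) + 1) ^ (1 - a.re) *
          ((j + α * n).factorial : ℝ)⁻¹) := by
  obtain ⟨C, hC0, hC⟩ := exists_norm_inv_Gamma_le a
  refine ⟨C * ((α : ℝ) + 1) ^ |1 - a.re|, |1 - a.re|, by positivity, fun j n ↦ ?_⟩
  calc _ ≤ _ := hC _
    _ ≤ C * ((((α : ℝ) + 1) ^ |1 - a.re| * ((n : ℝ) + 1) ^ |1 - a.re| *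
          ((j : ℝ) + 1) ^ (1 - a.re)) * _) := by gcongr; exact shifted_rpow_le _ α j n
    _ = _ := by ring

/-! ### The factorial ratio -/

theorem exp_le_factorial (m : ℕ) : Real.exp (m * Real.log m - m) ≤ m.factorial := by
  rcases Nat.eq_zero_or_pos m with rfl | hm
  · simp
  have hm' : (0 : ℝ) < m := by exact_mod_cast hm
  have h1 := Real.pow_div_factorial_le_exp (m : ℝ) hm'.le m
  rw [Real.exp_sub, div_le_iff₀ (Real.exp_pos _), mul_comm (m : ℝ), Real.exp_mul,
    Real.exp_log hm', Real.rpow_natCast]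
  rw [div_le_iff₀ (by positivity)] at h1
  linarith

theorem factorial_le_exp (m : ℕ) :
    (m.factorial : ℝ) ≤ Real.exp 1 * (m + 1) * Real.exp (m * Real.log m - m) := by
  rcases Nat.eq_zero_or_pos m with rfl | hm
  · simp
  obtain ⟨k, rfl⟩ : ∃ k, m = k + 1 := ⟨m - 1, by omega⟩
  have h := Stirling.stirlingSeq'_antitone (Nat.zero_le k)
  simp only [Function.comp, Nat.succ_eq_add_one, zero_add, Stirling.stirlingSeq_one] at h
  generalize hk : k + 1 = m at *
  have hm' : (1 : ℝ) ≤ m := by exact_mod_cast hm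
  rw [Stirling.stirlingSeq, div_le_iff₀ (by positivity)] at h
  refine h.trans ?_
  have e1 : Real.exp (m * Real.log m - m) = ((m : ℝ) / Real.exp 1) ^ m := by
    rw [Real.exp_sub, mul_comm (m : ℝ), Real.exp_mul, Real.exp_log (by linarith),
      Real.rpow_natCast, div_pow, ← Real.exp_nat_mul, mul_one]
  rw [e1, Real.sqrt_mul (by norm_num)]
  have e2 : Real.sqrt m ≤ m + 1 := by
    rw [Real.sqrt_le_left (by positivity)]; nlinarith
  have e3 : Real.sqrt 2 ≠ 0 := by positivity
  calc _ = Real.exp 1 * Real.sqrt m * ((m : ℝ) / Real.exp 1) ^ m := by field_simp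
    _ ≤ _ := by gcongr

/-- The ratio `(j + A n)! (j + B n)! j! / ∏ (j + cᵢ n)!` is at most its value at `j = 0`,
with denominators cleared. In each step `j → j + 1` the ratio is multiplied by a quotient of two
cubics whose difference is nonpositive by `hsum` and `hprod`. -/
theorem factorial_ratio_le {A B c0 c1 c2 : ℕ} (hsum : A + B = c0 + c1 + c2)
    (hprod : A * B ≤ c0 * c1 + c0 * c2 + c1 * c2) (n j : ℕ) :
    (j + A * n).factorial * (j + B * n).factorial * j.factorial *
        ((c0 * n).factorial * (c1 * n).factorial * (c2 * n).factorial) ≤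
      (A * n).factorial * (B * n).factorial *
        ((j + c0 * n).factorial * (j + c1 * n).factorial * (j + c2 * n).factorial) := by
  induction j with
  | zero => simp
  | succ j ih =>
    have hf (m : ℕ) : (j + 1 + m).factorial = (j + 1 + m) * (j + m).factorial := by
      rw [add_right_comm, Nat.factorial_succ]
    have hstep : (j + 1 + A * n) * (j + 1 + B * n) * (j + 1) ≤
        (j + 1 + c0 * n) * (j + 1 + c1 * n) * (j + 1 + c2 * n) := by
      have h1 : (j + 1) * n ^ 2 * (A * B) ≤
          (j + 1) * n ^ 2 * (c0 * c1 + c0 * c2 + c1 * c2) := Nat.mul_le_mul_left _ hprod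
      have h2 : (j + 1) ^ 2 * n * (A + B) = (j + 1) ^ 2 * n * (c0 + c1 + c2) := by rw [hsum]
      have h3 : 0 ≤ c0 * c1 * c2 * n ^ 3 := Nat.zero_le _
      nlinarith
    rw [hf, hf, hf, hf, hf, Nat.factorial_succ]
    calc _ = ((j + 1 + A * n) * (j + 1 + B * n) * (j + 1)) * ((j + A * n).factorial *
          (j + B * n).factorial * j.factorial *
          ((c0 * n).factorial * (c1 * n).factorial * (c2 * n).factorial)) := by ring
      _ ≤ _ := Nat.mul_le_mul hstep ih
      _ = _ := by ring

theorem factorial_ratio_le_exp {A B c0 c1 c2 : ℕ} (hsum : A + B = c0 + c1 + c2)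
    (hprod : A * B ≤ c0 * c1 + c0 * c2 + c1 * c2) (n j : ℕ) :
    ((j + A * n).factorial : ℝ) * (j + B * n).factorial * j.factorial *
        ((j + c0 * n).factorial : ℝ)⁻¹ * ((j + c1 * n).factorial : ℝ)⁻¹ *
        ((j + c2 * n).factorial : ℝ)⁻¹ ≤
      Real.exp 1 ^ 2 * (A + 1) * (B + 1) * ((n : ℝ) + 1) ^ (2 : ℝ) *
        Real.exp (A * Real.log A + B * Real.log B - c0 * Real.log c0 - c1 * Real.log c1
          - c2 * Real.log c2) ^ n := by
  have h : (((j + A * n).factorial * (j + B * n).factorial * j.factorial *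
        ((c0 * n).factorial * (c1 * n).factorial * (c2 * n).factorial) : ℕ) : ℝ) ≤
      ((A * n).factorial * (B * n).factorial *
        ((j + c0 * n).factorial * (j + c1 * n).factorial * (j + c2 * n).factorial) : ℕ) :=
    Nat.cast_le.2 (factorial_ratio_le hsum hprod n j)
  push_cast at h
  have hup (c : ℕ) : ((c * n).factorial : ℝ) ≤
      Real.exp 1 * ((c + 1) * (n + 1)) * Real.exp ((c * n : ℕ) * Real.log (c * n : ℕ)
        - (c * n : ℕ)) := by
    refine (factorial_le_exp (c * n)).trans ?_
    gcongr
    push_cast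
    nlinarith [Nat.cast_nonneg (α := ℝ) n, Nat.cast_nonneg (α := ℝ) c]
  -- The terms `c * n * log n` cancel by `hsum`; `c = 0` and `n = 0` are covered by `0 * log 0 = 0`.
  have hlog (c : ℕ) : ((c * n : ℕ) : ℝ) * Real.log (c * n : ℕ) =
      n * (c * Real.log c) + c * (n * Real.log n) := by
    push_cast
    rcases Nat.eq_zero_or_pos c with rfl | hc
    · simp
    rcases Nat.eq_zero_or_pos n with rfl | hn
    · simp
    rw [Real.log_mul (by positivity) (by positivity)]
    ring
  have hexp : Real.exp (A * Real.log A + B * Real.log B - c0 * Real.log c0 - c1 * Real.log c1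
          - c2 * Real.log c2) ^ n *
      (Real.exp ((c0 * n : ℕ) * Real.log (c0 * n : ℕ) - (c0 * n : ℕ)) *
      Real.exp ((c1 * n : ℕ) * Real.log (c1 * n : ℕ) - (c1 * n : ℕ)) *
      Real.exp ((c2 * n : ℕ) * Real.log (c2 * n : ℕ) - (c2 * n : ℕ))) =
      Real.exp ((A * n : ℕ) * Real.log (A * n : ℕ) - (A * n : ℕ)) *
      Real.exp ((B * n : ℕ) * Real.log (B * n : ℕ) - (B * n : ℕ)) := by
    have hs : (A : ℝ) + B = c0 + c1 + c2 := by exact_mod_cast hsum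
    rw [← Real.exp_nat_mul]
    simp only [hlog, ← Real.exp_add]
    congr 1
    push_cast
    linear_combination (n - n * Real.log n) * hs
  have hlow := mul_le_mul (mul_le_mul (exp_le_factorial (c0 * n)) (exp_le_factorial (c1 * n))
    (Real.exp_pos _).le (by positivity)) (exp_le_factorial (c2 * n))
    (Real.exp_pos _).le (by positivity)
  have hupp := mul_le_mul (hup A) (hup B) (by positivity) (by positivity)
  set X := Real.exp (A * Real.log A + B * Real.log B - c0 * Real.log c0 - c1 * Real.log c1
          - c2 * Real.log c2) ^ n with hX
  have hX0 : 0 < X := by positivity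
  have hfin : ((A * n).factorial : ℝ) * (B * n).factorial ≤
      Real.exp 1 ^ 2 * (A + 1) * (B + 1) * ((n : ℝ) + 1) ^ (2 : ℝ) * X *
        ((c0 * n).factorial * (c1 * n).factorial * (c2 * n).factorial) := by
    refine hupp.trans ?_
    calc _ = Real.exp 1 ^ 2 * (A + 1) * (B + 1) * ((n : ℝ) + 1) ^ (2 : ℝ) *
          (Real.exp ((A * n : ℕ) * Real.log (A * n : ℕ) - (A * n : ℕ)) *
          Real.exp ((B * n : ℕ) * Real.log (B * n : ℕ) - (B * n : ℕ))) := by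
          rw [Real.rpow_two]; ring
      _ = Real.exp 1 ^ 2 * (A + 1) * (B + 1) * ((n : ℝ) + 1) ^ (2 : ℝ) * X * _ := by
          rw [← hexp, mul_assoc _ X]
      _ ≤ _ := by gcongr
  have hc : (0 : ℝ) < (c0 * n).factorial * (c1 * n).factorial * (c2 * n).factorial := by
    positivity
  have hj : (0 : ℝ) < (j + c0 * n).factorial * (j + c1 * n).factorial *
    (j + c2 * n).factorial := by positivity
  rw [mul_assoc _ _ ((j + c1 * n).factorial : ℝ)⁻¹, mul_assoc _ _ ((j + c2 * n).factorial : ℝ)⁻¹,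
    ← mul_inv, ← mul_inv, ← div_eq_mul_inv, div_le_iff₀ hj]
  refine le_of_mul_le_mul_right (h.trans ?_) hc
  refine (mul_le_mul_of_nonneg_right hfin hj.le).trans_eq ?_
  ring

/-! ### The series -/

theorem exists_norm_tsum_le {A B c0 c1 c2 : ℕ} (hsum : A + B = c0 + c1 + c2)
    (hprod : A * B ≤ c0 * c1 + c0 * c2 + c1 * c2) (u0 u1 u2 v0 v1 v2 : ℂ)
    (hs : (u0 + u1 + u2 - v0 - v1 - v2).re < -1) :
    ∃ C E : ℝ, 0 < C ∧ ∀ n : ℕ,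
      ‖∑' j : ℕ, Gamma ((j + A * n : ℕ) + u0) * Gamma ((j + B * n : ℕ) + u1) *
          Gamma ((j + 0 * n : ℕ) + u2) /
        (Gamma ((j + c0 * n : ℕ) + v0) * Gamma ((j + c1 * n : ℕ) + v1) *
          Gamma ((j + c2 * n : ℕ) + v2))‖ ≤
      C * (((n : ℝ) + 1) ^ E *
        Real.exp (A * Real.log A + B * Real.log B - c0 * Real.log c0 - c1 * Real.log c1
          - c2 * Real.log c2) ^ n) := by
  obtain ⟨C0, E0, hC0, h0⟩ := exists_norm_Gamma_shift_le u0 A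
  obtain ⟨C1, E1, hC1, h1⟩ := exists_norm_Gamma_shift_le u1 B
  obtain ⟨C2, E2, hC2, h2⟩ := exists_norm_Gamma_shift_le u2 0
  obtain ⟨C3, E3, hC3, h3⟩ := exists_norm_inv_Gamma_shift_le v0 c0
  obtain ⟨C4, E4, hC4, h4⟩ := exists_norm_inv_Gamma_shift_le v1 c1
  obtain ⟨C5, E5, hC5, h5⟩ := exists_norm_inv_Gamma_shift_le v2 c2
  have hsm : Summable fun j : ℕ ↦ ((j : ℝ) + 1) ^ (u0 + u1 + u2 - v0 - v1 - v2).re := by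
    have := (summable_nat_add_iff 1).2 (Real.summable_nat_rpow.2 hs)
    simpa using this
  set σ := ∑' j : ℕ, ((j : ℝ) + 1) ^ (u0 + u1 + u2 - v0 - v1 - v2).re with hσ
  have hσ0 : 0 < σ := hsm.tsum_pos (fun j ↦ by positivity) 0 (by positivity)
  refine ⟨C0 * C1 * C2 * C3 * C4 * C5 * (Real.exp 1 ^ 2 * (A + 1) * (B + 1)) * σ,
    E0 + E1 + E2 + E3 + E4 + E5 + 2, by positivity, fun n ↦ ?_⟩
  have hn : (0 : ℝ) < n + 1 := by positivity
  set X := Real.exp (A * Real.log A + B * Real.log B - c0 * Real.log c0 - c1 * Real.log c1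
          - c2 * Real.log c2) ^ n with hX
  have hX0 : 0 < X := by positivity
  have hS := hsm.hasSum.mul_left (C0 * C1 * C2 * C3 * C4 * C5 *
    (Real.exp 1 ^ 2 * (A + 1) * (B + 1)) *
      (((n : ℝ) + 1) ^ (E0 + E1 + E2 + E3 + E4 + E5 + 2) * X))
  refine (tsum_of_norm_bounded hS fun j ↦ ?_).trans_eq (by ring)
  have hj : (0 : ℝ) < j + 1 := by positivity
  rw [div_eq_mul_inv, mul_inv, mul_inv, norm_mul, norm_mul, norm_mul, norm_mul, norm_mul]
  have hb := mul_le_mul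
    (mul_le_mul (mul_le_mul (h0 j n) (h1 j n) (norm_nonneg _) (by positivity))
      (h2 j n) (norm_nonneg _) (by positivity))
    (mul_le_mul (mul_le_mul (h3 j n) (h4 j n) (norm_nonneg _) (by positivity))
      (h5 j n) (norm_nonneg _) (by positivity)) (by positivity) (by positivity)
  refine hb.trans ?_
  have hre : (u0 + u1 + u2 - v0 - v1 - v2).re =
      (u0.re - 1) + (u1.re - 1) + (u2.re - 1) + (1 - v0.re) + (1 - v1.re) + (1 - v2.re) := by
    simp; ring
  rw [hre]
  simp only [Real.rpow_add hn, Real.rpow_add hj]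
  have hr := factorial_ratio_le_exp hsum hprod n j
  rw [← hX] at hr
  rw [zero_mul, add_zero]
  set W := C0 * C1 * C2 * C3 * C4 * C5 *
    (((n : ℝ) + 1) ^ E0 * ((n : ℝ) + 1) ^ E1 * ((n : ℝ) + 1) ^ E2 * ((n : ℝ) + 1) ^ E3 *
      ((n : ℝ) + 1) ^ E4 * ((n : ℝ) + 1) ^ E5) *
    (((j : ℝ) + 1) ^ (u0.re - 1) * ((j : ℝ) + 1) ^ (u1.re - 1) * ((j : ℝ) + 1) ^ (u2.re - 1) *
      ((j : ℝ) + 1) ^ (1 - v0.re) * ((j : ℝ) + 1) ^ (1 - v1.re) * ((j : ℝ) + 1) ^ (1 - v2.re))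
    with hW
  have hW0 : 0 ≤ W := by positivity
  have := mul_le_mul_of_nonneg_left hr hW0
  rw [hW] at this
  refine (Eq.trans_le ?_ this).trans_eq ?_
  · ring
  · ring

open Filter Topology in
theorem exists_poly_mul_geom_le (E : ℝ) {r d : ℝ} (hr : 0 < r) (hrd : r < d) :
    ∃ C : ℝ, 0 < C ∧ ∀ n : ℕ, ((n : ℝ) + 1) ^ E * r ^ n ≤ C * d ^ n := by
  have hd : 0 < d := hr.trans hrd
  have hq : 0 < r / d := div_pos hr hd
  have hq1 : |r / d| < 1 := by rw [abs_of_pos hq]; exact (div_lt_one hd).2 hrd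
  obtain ⟨C, hC⟩ := (tendsto_pow_const_mul_const_pow_of_abs_lt_one ⌈E⌉₊ hq1).bddAbove_range
  refine ⟨max C 1 / (r / d), by positivity, fun n ↦ ?_⟩
  have h := (hC (Set.mem_range_self (n + 1))).trans (le_max_left C 1)
  simp only [Nat.cast_succ] at h
  have hE : ((n : ℝ) + 1) ^ E ≤ ((n : ℝ) + 1) ^ ⌈E⌉₊ := by
    rw [← Real.rpow_natCast]
    exact Real.rpow_le_rpow_of_exponent_le (by linarith [Nat.cast_nonneg (α := ℝ) n])
      (Nat.le_ceil E)
  calc _ ≤ ((n : ℝ) + 1) ^ ⌈E⌉₊ * r ^ n := by gcongr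
    _ = ((n : ℝ) + 1) ^ ⌈E⌉₊ * (r / d) ^ (n + 1) / (r / d) * d ^ n := by
      rw [pow_succ, div_pow]; field_simp
    _ ≤ _ := by gcongr

/-! ### Conclusion -/

theorem abs_Dval {p0 p1 p2 q1 q2 : ℤ} (h0 : 0 < p0) (h1 : 0 < p1) (h2 : 0 < p2)
    (h10 : 0 < q1 - p0) (h11 : 0 < q1 - p1) (h12 : 0 < q1 - p2)
    (h20 : 0 < q2 - p0) (h21 : 0 < q2 - p1) (h22 : 0 < q2 - p2) :
    |Dval p0 p1 p2 q1 q2| =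
      Real.exp ((p0 : ℝ) * Real.log p0 + p1 * Real.log p1 + p2 * Real.log p2
      - ((q1 : ℝ) - p0) * Real.log (q1 - p0) - ((q1 : ℝ) - p1) * Real.log (q1 - p1)
      - ((q1 : ℝ) - p2) * Real.log (q1 - p2)
      - ((q2 : ℝ) - p0) * Real.log (q2 - p0) - ((q2 : ℝ) - p1) * Real.log (q2 - p1)
      - ((q2 : ℝ) - p2) * Real.log (q2 - p2)) := by
  have key {z : ℤ} (hz : 0 < z) : (z : ℝ) ^ (z : ℝ) = Real.exp (z * Real.log z) := by
    rw [Real.rpow_def_of_pos (by exact_mod_cast hz), mul_comm]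
  rw [Dval, key h0, key h1, key h2, key h10, key h11, key h12, key h20, key h21, key h22,
    abs_div, abs_mul, abs_zpow, abs_neg, abs_one, one_zpow, one_mul]
  simp only [← Real.exp_add, Real.abs_exp, ← Real.exp_sub]
  congr 1
  push_cast
  ring

/-- For `p ∈ S(ℤ)`, assuming `χ(x;p) ≥ 0` on `[0, q₂−q₁]`, and
`a ∈ ℂ⁵` with `Re s(a) > 0`, `a₀ ∉ ℤ≤0`, `b₁−a₀ ∉ ℤ`, `b₂−a₀ ∉ ℤ`, the third
component `g₃(n) = Σ_{k=(q₂−p₀)n}^{∞} φ(k;n)` satisfies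
`|t(a)·g₃(n)| ≤ C₃·d₃ⁿ` for some `0 < d₃ < |D(p)|`, `C₃ > 0` and all `n ≥ N₃`. -/
theorem third_component_bound (p0 p1 p2 q1 q2 : ℤ)
    (hbal : q1 + q2 = p0 + p1 + p2)
    (h1 : p1 ≤ p0) (h2 : p2 ≤ p0) (h3 : p0 < q1) (h4 : q1 ≤ q2) (h5 : q2 < p1 + p2)
    (hchi : ∀ x : ℝ, 0 ≤ x → x ≤ (q2 : ℝ) - (q1 : ℝ) →
      0 ≤ (x + q1 - p0) * (x + q1 - p1) * (x + q1 - p2) + x * (x + q1) * (x + q1 - q2))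
    (a0 a1 a2 b1 b2 : ℂ)
    (hs : 0 < (b1 + b2 - a0 - a1 - a2).re)
    (ha0 : ∀ k : ℤ, k ≤ 0 → a0 ≠ (k : ℂ))
    (hb1 : ∀ k : ℤ, b1 - a0 ≠ (k : ℂ)) (hb2 : ∀ k : ℤ, b2 - a0 ≠ (k : ℂ)) :
    ∃ d3 : ℝ, 0 < d3 ∧ d3 < |Dval p0 p1 p2 q1 q2| ∧
      ∃ C3 : ℝ, 0 < C3 ∧ ∃ N3 : ℕ, ∀ n : ℕ, N3 ≤ n →
        ‖tval a0 b1 b2 *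
            ∑' k : ℕ,
              phiSummand a0 a1 a2 b1 b2 p0 p1 p2 q1 q2 ((q2 - p0).toNat * n + k) n‖ ≤
          C3 * d3 ^ n := by
  have hp1 : 0 < p1 := by omega
  have hp2 : 0 < p2 := by omega
  have hbalR : (q1 : ℝ) + q2 = p0 + p1 + p2 := by exact_mod_cast hbal
  have h1R : (p1 : ℝ) ≤ p0 := by exact_mod_cast h1
  have h2R : (p2 : ℝ) ≤ p0 := by exact_mod_cast h2
  have h3R : (p0 : ℝ) < q1 := by exact_mod_cast h3
  have h4R : (q1 : ℝ) ≤ q2 := by exact_mod_cast h4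
  have h5R : (q2 : ℝ) < p1 + p2 := by exact_mod_cast h5
  have hlt := phase_end_lt hbalR h1R h2R h3R h4R h5R hchi
  have hw := esymm_sub_pos hbalR h1R h2R h3R h4R h5R
  have hexp := Real.exp_lt_exp.2 hlt
  rw [← abs_Dval (by omega) hp1 hp2 (by omega) (by omega) (by omega) (by omega) (by omega)
    (by omega)] at hexp
  obtain ⟨d, hd1, hd2⟩ := exists_between hexp
  refine ⟨d, (Real.exp_pos _).trans hd1, hd2, ?_⟩
  obtain ⟨A, hA⟩ : ∃ A : ℕ, (A : ℤ) = q2 := ⟨q2.toNat, Int.toNat_of_nonneg (by omega)⟩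
  obtain ⟨B, hB⟩ : ∃ B : ℕ, (B : ℤ) = q2 - q1 := ⟨(q2 - q1).toNat, Int.toNat_of_nonneg (by omega)⟩
  obtain ⟨c0, hc0⟩ : ∃ c : ℕ, (c : ℤ) = q2 - p0 :=
    ⟨(q2 - p0).toNat, Int.toNat_of_nonneg (by omega)⟩
  obtain ⟨c1, hc1⟩ : ∃ c : ℕ, (c : ℤ) = q2 - p1 :=
    ⟨(q2 - p1).toNat, Int.toNat_of_nonneg (by omega)⟩
  obtain ⟨c2, hc2⟩ : ∃ c : ℕ, (c : ℤ) = q2 - p2 :=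
    ⟨(q2 - p2).toNat, Int.toNat_of_nonneg (by omega)⟩
  have hsum : A + B = c0 + c1 + c2 := by omega
  have hprod : A * B ≤ c0 * c1 + c0 * c2 + c1 * c2 := by
    have hwZ : 0 < p0 * p1 + p0 * p2 + p1 * p2 - q1 * q2 := by exact_mod_cast hw
    have hid : q2 * (q2 - q1) + (p0 * p1 + p0 * p2 + p1 * p2 - q1 * q2) =
        (q2 - p0) * (q2 - p1) + (q2 - p0) * (q2 - p2) + (q2 - p1) * (q2 - p2) := by
      linear_combination (-2 * q2) * hbal
    zify
    rw [hA, hB, hc0, hc1, hc2]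
    linarith
  obtain ⟨C, E, hC0, hC⟩ := exists_norm_tsum_le hsum hprod a0 (a0 - b1 + 1) (a0 - b2 + 1) 1
    (a0 - a1 + 1) (a0 - a2 + 1) (by
      simp only [sub_re, add_re, one_re] at hs ⊢
      linarith)
  obtain ⟨K, hK0, hK⟩ := exists_poly_mul_geom_le E (Real.exp_pos _) hd1
  refine ⟨(‖tval a0 b1 b2‖ + 1) * (C * K), by positivity, 0, fun n _ ↦ ?_⟩
  have hAR : (A : ℝ) = q2 := by exact_mod_cast hA
  have hBR : (B : ℝ) = q2 - q1 := by exact_mod_cast hB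
  have hc0R : (c0 : ℝ) = q2 - p0 := by exact_mod_cast hc0
  have hc1R : (c1 : ℝ) = q2 - p1 := by exact_mod_cast hc1
  have hc2R : (c2 : ℝ) = q2 - p2 := by exact_mod_cast hc2
  have hn := hC n
  rw [hAR, hBR, hc0R, hc1R, hc2R] at hn
  have hterm (j : ℕ) :
      phiSummand a0 a1 a2 b1 b2 p0 p1 p2 q1 q2 ((q2 - p0).toNat * n + j) n =
      Gamma ((j + A * n : ℕ) + a0) * Gamma ((j + B * n : ℕ) + (a0 - b1 + 1)) *
          Gamma ((j + 0 * n : ℕ) + (a0 - b2 + 1)) /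
        (Gamma ((j + c0 * n : ℕ) + 1) * Gamma ((j + c1 * n : ℕ) + (a0 - a1 + 1)) *
          Gamma ((j + c2 * n : ℕ) + (a0 - a2 + 1))) := by
    have hAC : (A : ℂ) = q2 := by exact_mod_cast congrArg (Int.cast (R := ℂ)) hA
    have hBC : (B : ℂ) = q2 - q1 := by exact_mod_cast congrArg (Int.cast (R := ℂ)) hB
    have hc0C : (c0 : ℂ) = q2 - p0 := by exact_mod_cast congrArg (Int.cast (R := ℂ)) hc0
    have hc1C : (c1 : ℂ) = q2 - p1 := by exact_mod_cast congrArg (Int.cast (R := ℂ)) hc1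
    have hc2C : (c2 : ℂ) = q2 - p2 := by exact_mod_cast congrArg (Int.cast (R := ℂ)) hc2
    have ht : (q2 - p0).toNat = c0 := by omega
    rw [ht, phiSummand]
    push_cast
    rw [hAC, hBC, hc0C, hc1C, hc2C]
    refine congrArg₂ (· / ·) (congrArg₂ (· * ·) (congrArg₂ (· * ·) ?_ ?_) ?_)
      (congrArg₂ (· * ·) (congrArg₂ (· * ·) ?_ ?_) ?_) <;> exact congrArg Gamma (by ring)
  simp only [hterm]
  rw [norm_mul]
  calc _ ≤ ‖tval a0 b1 b2‖ * (C * (K * d ^ n)) := by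
        refine mul_le_mul_of_nonneg_left (hn.trans ?_) (norm_nonneg _)
        exact mul_le_mul_of_nonneg_left (hK n) hC0.le
    _ ≤ (‖tval a0 b1 b2‖ + 1) * (C * (K * d ^ n)) := by
        have hd0 : 0 < d := (Real.exp_pos _).trans hd1
        gcongr
        linarith
    _ = _ := by ring
end

section
/- Let a = (a₀,a₁,a₂;b₁,b₂) ∈ ℂ⁵ with Re s(a) > 1, and assume a₀, a₁, a₂, a₀−b₁+1, a₀−b₂+1 ∉ ℤ≤0 (so that all series below are defined; note s(a+𝟙) = s(a) − 1 > 0, where 𝟙 := (1,1,1;1,1)). Set y⁰(a) := ₃f₂(a) and y^∞(a) := e^{iπ s(a)} · ₃g₂(a). Then W(a) := y⁰(a)·y^∞(a+𝟙) − y⁰(a+𝟙)·y^∞(a) = −e^{iπ s(a)} · Γ(a₀)Γ(a₁)Γ(a₂)Γ(a₀−b₁+1)Γ(a₀−b₂+1)Γ(s(a)−1) / (Γ(b₁−a₁)Γ(b₁−a₂)Γ(b₂−a₁)Γ(b₂−a₂)). -/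
/-!
Since `exp (iπ (s - 1)) = -exp (iπ s)`, the claim is that
`f(a) g(a + 𝟙) + f(a + 𝟙) g(a)` is a quotient of Gamma values, where `f = ₃f₂` and `g = ₃g₂`.

Write `t j` for the summand of `₃f₂` and `S i = ∑ j, j ^ i * t j` for its moments. Then
`f(a + 𝟙)` is the first moment of the series `f(a)`, and `g(a + 𝟙)` is `a₀` times the zeroth
moment plus the first moment of the series `g(a)`, so the left side is a bilinear expression `wr`
in the moments `S 0`, `S 1` of the two series.

The shift `v = (1,0,0;1,1)` acts on the parameters of both series in the same way, namely
`(A,B,C;D,E) ↦ (A+1,B,C;D+1,E+1)`. Index shift and telescoping give a 2 × 2 contiguity relation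
between the moments before and after this shift (`contiguity`), and substituting it in `wr` gives
`a₀ (s - 1) wr(a) = ∏ (bᵢ - aⱼ) wr(a + v)` (`wr_step`). The Gamma quotient `rhs` satisfies the same
recurrence (`rhs_step`). Along `a + n v` both series are dominated by their term `j = 0`
(`tendsto_S_div`, by dominated convergence; the majorant is again a `₃f₂` series, see `norm_t_le`),
and the product of these leading terms times `a₀ + n` is asymptotic to `rhs(a + n v)`
(`tendsto_leading_div_rhs`). Hence `wr / rhs → 1` along `a + n v`, and the recurrence carries
equality back to `n = 0` (`wr_eq_rhs`).

Everything about reciprocals uses that Mathlib sets `Gamma` to `0` at its poles, so that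
`(Gamma z)⁻¹ = z * (Gamma (z + 1))⁻¹` holds for every `z`; no condition is needed on the
parameters in denominators.
-/

open Complex

/-- Renormalized hypergeometric series `₃f₂(a₀,a₁,a₂;b₁,b₂)` at unit argument. -/
noncomputable def threeF2 (a0 a1 a2 b1 b2 : ℂ) : ℂ :=
  ∑' j : ℕ, (Gamma (a0 + j) * Gamma (a1 + j) * Gamma (a2 + j)) /
    (Gamma (1 + j) * Gamma (b1 + j) * Gamma (b2 + j))

/-- `₃g₂(a₀,a₁,a₂;b₁,b₂) := ₃f₂(a₀, a₀−b₁+1, a₀−b₂+1; a₀−a₁+1, a₀−a₂+1)`. -/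
noncomputable def threeG2 (a0 a1 a2 b1 b2 : ℂ) : ℂ :=
  threeF2 a0 (a0 - b1 + 1) (a0 - b2 + 1) (a0 - a1 + 1) (a0 - a2 + 1)

namespace ThreeF2

open Filter Topology Asymptotics
/-- The summand of `₃f₂(A,B,C;D,E)`. -/
noncomputable def t (A B C D E : ℂ) (j : ℕ) : ℂ :=
  (Gamma (A + j) * Gamma (B + j) * Gamma (C + j)) /
    (Gamma (1 + j) * Gamma (D + j) * Gamma (E + j))

/-- `z` is not a non-positive integer, in the form in which it is used: no `z + j` vanishes. -/
def Regular (z : ℂ) : Prop := ∀ j : ℕ, z + j ≠ 0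

/-! ### Asymptotics of Gamma and summability -/

lemma Regular.shift {z : ℂ} (h : Regular z) (n : ℕ) : Regular (z + n) := fun j => by
  have := h (n + j)
  push_cast at this
  rwa [← add_assoc] at this

lemma Regular.gamma_ne {z : ℂ} (h : Regular z) (j : ℕ) : Gamma (z + j) ≠ 0 := by
  apply Complex.Gamma_ne_zero
  intro m hm
  apply h (j + m)
  push_cast
  rw [← add_assoc, hm]; ring

lemma inv_Gamma (z : ℂ) : (Gamma z)⁻¹ = z * (Gamma (z + 1))⁻¹ :=
  Complex.one_div_Gamma_eq_self_mul_one_div_Gamma_add_one z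

lemma tendsto_nat_div_add (z : ℂ) :
    Tendsto (fun n : ℕ => (n : ℂ) / (z + n)) atTop (𝓝 1) := by
  have := tendsto_natCast_div_add_atTop (𝕜 := ℂ) z
  simpa [add_comm] using this

lemma tendsto_Gamma_of_regular {z : ℂ} (hz : Regular z) :
    Tendsto (fun n : ℕ => Gamma (z + n) / ((n.factorial : ℂ) * (n : ℂ) ^ (z - 1))) atTop (𝓝 1) := by
  have h0 : Gamma z ≠ 0 := by simpa using hz.gamma_ne 0
  have hprod : ∀ n : ℕ, Gamma (z + n) = Gamma z * ∏ j ∈ Finset.range n, (z + j) := by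
    intro n
    induction n with
    | zero => simp
    | succ n ih =>
      rw [Finset.prod_range_succ, ← mul_assoc, ← ih, mul_comm, ← Complex.Gamma_add_one _ (hz n)]
      push_cast; ring_nf
  have h1 := ((tendsto_const_nhds (x := Gamma z)).div (Complex.GammaSeq_tendsto_Gamma z) h0).mul
    (tendsto_nat_div_add z)
  rw [div_self h0, one_mul] at h1
  refine h1.congr' ?_
  filter_upwards [eventually_gt_atTop 0] with n hn
  have hn' : (n : ℂ) ≠ 0 := by exact_mod_cast hn.ne'
  have hf : (n.factorial : ℂ) ≠ 0 := by exact_mod_cast n.factorial_ne_zero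
  have hp : (n : ℂ) ^ z ≠ 0 := by simp [Complex.cpow_eq_zero_iff, hn']
  have hpr : ∏ j ∈ Finset.range n, (z + j) ≠ 0 := Finset.prod_ne_zero_iff.2 fun j _ => hz j
  have hzn := hz n
  simp only [Pi.div_apply, Complex.GammaSeq]
  rw [hprod, Complex.cpow_sub _ _ hn', Complex.cpow_one, Finset.prod_range_succ]
  field_simp

/-- `Γ(z + n) ~ n! n ^ (z - 1)`, for every complex `z`; a pole of `Γ` at `z` is avoided by descending
from `z + m` with `0 < Re (z + m)`. -/
lemma tendsto_Gamma (z : ℂ) :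
    Tendsto (fun n : ℕ => Gamma (z + n) / ((n.factorial : ℂ) * (n : ℂ) ^ (z - 1))) atTop (𝓝 1) := by
  obtain ⟨m, hm⟩ := exists_nat_gt (-z.re)
  have key : ∀ (m : ℕ) (z : ℂ), -z.re < m →
    Tendsto (fun n : ℕ => Gamma (z + n) / ((n.factorial : ℂ) * (n : ℂ) ^ (z - 1))) atTop (𝓝 1) := by
    intro m
    induction m with
    | zero =>
      intro z hz
      apply tendsto_Gamma_of_regular
      intro j hj
      have := congrArg Complex.re hj
      simp at this hz
      have : (0 : ℝ) ≤ j := j.cast_nonneg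
      linarith
    | succ m ih =>
      intro z hz
      have h := (ih (z + 1) (by simp at hz ⊢; linarith)).mul (tendsto_nat_div_add z)
      rw [one_mul] at h
      refine h.congr' ?_
      obtain ⟨k, hk⟩ := exists_nat_gt (-z.re)
      filter_upwards [eventually_gt_atTop 0, eventually_ge_atTop k] with n hn hkn
      have hn' : (n : ℂ) ≠ 0 := by exact_mod_cast hn.ne'
      have hf : (n.factorial : ℂ) ≠ 0 := by exact_mod_cast n.factorial_ne_zero
      have hp : (n : ℂ) ^ z ≠ 0 := by simp [Complex.cpow_eq_zero_iff, hn']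
      have hzn : z + n ≠ 0 := by
        intro hj
        have := congrArg Complex.re hj
        simp at this
        have : (k : ℝ) ≤ n := by exact_mod_cast hkn
        linarith
      rw [show z + 1 + (n : ℂ) = z + n + 1 by ring, Complex.Gamma_add_one _ hzn,
        add_sub_cancel_right, Complex.cpow_sub _ _ hn', Complex.cpow_one]
      field_simp
  exact key m z hm

/-- The summand decays like `n ^ (-s - 1)`, where `s = D + E - A - B - C`. -/
lemma isBigO_t (A B C D E : ℂ) :
    (t A B C D E) =O[atTop] fun n : ℕ => (n : ℝ) ^ (-(D + E - A - B - C).re - 1) := by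
  have h := (((tendsto_Gamma A).mul (tendsto_Gamma B)).mul (tendsto_Gamma C)).div
    (((tendsto_Gamma 1).mul (tendsto_Gamma D)).mul (tendsto_Gamma E)) (by norm_num)
  have hpow : (fun n : ℕ => (n : ℂ) ^ (-(D + E - A - B - C) - 1)) =O[atTop]
      fun n : ℕ => (n : ℝ) ^ (-(D + E - A - B - C).re - 1) := by
    refine IsBigO.of_bound 1 ?_
    filter_upwards [eventually_gt_atTop 0] with n hn
    rw [Complex.norm_natCast_cpow_of_pos hn, one_mul]
    simp [abs_of_nonneg, Real.rpow_nonneg]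
  refine ((h.isBigO_one ℝ).mul hpow).congr' ?_ ?_
  · filter_upwards [eventually_gt_atTop 0] with n hn
    have hn' : (n : ℂ) ≠ 0 := by exact_mod_cast hn.ne'
    have hf : (n.factorial : ℂ) ≠ 0 := by exact_mod_cast n.factorial_ne_zero
    have hp : ∀ z : ℂ, (n : ℂ) ^ z ≠ 0 := fun z => by simp [Complex.cpow_eq_zero_iff, hn']
    have hA := hp A
    have hB := hp B
    have hC := hp C
    have hD := hp D
    have hE := hp E
    simp only [t, Pi.div_apply]
    have : (n : ℂ) ^ (-(D + E - A - B - C) - 1) =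
        (n : ℂ) ^ A * (n : ℂ) ^ B * (n : ℂ) ^ C / ((n : ℂ) ^ D * (n : ℂ) ^ E) / n := by
      rw [show (-(D + E - A - B - C) - 1) = A + B + C - (D + E) - 1 by ring,
        Complex.cpow_sub _ _ hn', Complex.cpow_sub _ _ hn', Complex.cpow_add _ _ hn',
        Complex.cpow_add _ _ hn', Complex.cpow_add _ _ hn', Complex.cpow_one]
    rw [this]
    simp only [Complex.cpow_sub _ _ hn', Complex.cpow_one, sub_self, Complex.cpow_zero]
    have h1 : Gamma (1 + (n : ℂ)) = n.factorial := by
      rw [add_comm, Complex.Gamma_nat_eq_factorial]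
    rw [h1]
    by_cases hGD : Gamma (D + n) = 0
    · simp [hGD]
    by_cases hGE : Gamma (E + n) = 0
    · simp [hGE]
    field_simp
  · exact Eventually.of_forall fun n => by simp

lemma isBigO_pow_t (A B C D E : ℂ) (i : ℕ) :
    (fun j : ℕ => (j : ℂ) ^ i * t A B C D E j) =O[atTop]
      fun n : ℕ => (n : ℝ) ^ ((i : ℝ) - (D + E - A - B - C).re - 1) := by
  have h : (fun j : ℕ => (j : ℂ) ^ i) =O[atTop] fun n : ℕ => (n : ℝ) ^ i :=
    IsBigO.of_bound 1 (Eventually.of_forall fun n => by simp)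
  refine (h.mul (isBigO_t A B C D E)).congr' EventuallyEq.rfl ?_
  filter_upwards [eventually_gt_atTop 0] with n hn
  rw [← Real.rpow_natCast, ← Real.rpow_add (by exact_mod_cast hn)]
  congr 1; ring

lemma summable_pow_t {A B C D E : ℂ} (i : ℕ) (hs : (i : ℝ) < (D + E - A - B - C).re) :
    Summable fun j : ℕ => (j : ℂ) ^ i * t A B C D E j :=
  summable_of_isBigO_nat (Real.summable_nat_rpow.2 (by linarith)) (isBigO_pow_t A B C D E i)

lemma tendsto_pow_t {A B C D E : ℂ} (i : ℕ) (hs : (i : ℝ) < (D + E - A - B - C).re + 1) :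
    Tendsto (fun j : ℕ => (j : ℂ) ^ i * t A B C D E j) atTop (𝓝 0) := by
  refine (isBigO_pow_t A B C D E i).trans_tendsto ?_
  have := (tendsto_rpow_neg_atTop (y := -((i : ℝ) - (D + E - A - B - C).re - 1))
    (by linarith)).comp (tendsto_natCast_atTop_atTop (R := ℝ))
  simpa only [Function.comp_def, neg_neg] using this

/-! ### Contiguity under `(A,B,C;D,E) ↦ (A+1,B,C;D+1,E+1)` -/

lemma t_shift_left {A B C D E : ℂ} (hA : Regular A) (j : ℕ) :
    (A + j) * t A B C D E j = (D + j) * (E + j) * t (A + 1) B C (D + 1) (E + 1) j := by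
  simp only [t, div_eq_mul_inv, mul_inv]
  rw [inv_Gamma (D + j), inv_Gamma (E + j), add_right_comm A, add_right_comm D,
    add_right_comm E, Complex.Gamma_add_one _ (hA j)]
  ring

lemma t_shift_right {A B C D E : ℂ} (hB : Regular B) (hC : Regular C) (j : ℕ) :
    ((j : ℂ) + 1) * t A B C D E (j + 1) =
      (B + j) * (C + j) * t (A + 1) B C (D + 1) (E + 1) j := by
  simp only [t, div_eq_mul_inv, mul_inv]
  push_cast
  simp only [← add_assoc]
  rw [add_right_comm A, add_right_comm D,
    add_right_comm E, Complex.Gamma_add_one _ (hB j), Complex.Gamma_add_one _ (hC j),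
    inv_Gamma (1 + j)]
  ring

/-- The `i`-th moment of the `₃f₂` series; `S 0` is `₃f₂` itself. -/
noncomputable def S (i : ℕ) (A B C D E : ℂ) : ℂ := ∑' j : ℕ, (j : ℂ) ^ i * t A B C D E j

lemma hasSum_quadratic {A B C D E : ℂ} (hs : 2 < (D + E - A - B - C).re) (p q r : ℂ) :
    HasSum (fun j : ℕ => (p * (j : ℂ) ^ 2 + q * j + r) * t A B C D E j)
      (p * S 2 A B C D E + q * S 1 A B C D E + r * S 0 A B C D E) := by
  have h2 := (summable_pow_t (A := A) (B := B) (C := C) (D := D) (E := E) 2 (by exact_mod_cast hs)).hasSum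
  have h1 := (summable_pow_t (A := A) (B := B) (C := C) (D := D) (E := E) 1 (by push_cast; linarith)).hasSum
  have h0 := (summable_pow_t (A := A) (B := B) (C := C) (D := D) (E := E) 0 (by push_cast; linarith)).hasSum
  refine (((h2.mul_left p).add (h1.mul_left q)).add (h0.mul_left r)).congr_fun ?_
  intro j
  ring

lemma S_one_eq {A B C D E : ℂ} (hB : Regular B) (hC : Regular C)
    (hs : 1 < (D + E - A - B - C).re) :
    S 1 A B C D E = S 2 (A + 1) B C (D + 1) (E + 1) + (B + C) * S 1 (A + 1) B C (D + 1) (E + 1) +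
      B * C * S 0 (A + 1) B C (D + 1) (E + 1) := by
  have hs' : 2 < ((D + 1) + (E + 1) - (A + 1) - B - C).re := by
    simp at hs ⊢; linarith
  have h := (hasSum_quadratic hs' 1 (B + C) (B * C)).tsum_eq
  rw [one_mul] at h
  rw [← h, S, (summable_pow_t 1 (by simpa using hs)).tsum_eq_zero_add]
  simp only [Nat.cast_zero, pow_one, zero_mul, zero_add]
  refine tsum_congr fun j => ?_
  push_cast
  rw [t_shift_right hB hC]; ring

lemma S_zero_eq {A B C D E : ℂ} (hA : Regular A)
    (hs : 1 < (D + E - A - B - C).re) :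
    A * S 0 A B C D E + S 1 A B C D E =
      S 2 (A + 1) B C (D + 1) (E + 1) + (D + E) * S 1 (A + 1) B C (D + 1) (E + 1) +
      D * E * S 0 (A + 1) B C (D + 1) (E + 1) := by
  have hs' : 2 < ((D + 1) + (E + 1) - (A + 1) - B - C).re := by
    simp at hs ⊢; linarith
  have h := (hasSum_quadratic hs' 1 (D + E) (D * E))
  rw [one_mul] at h
  have h1 := (summable_pow_t (A := A) (B := B) (C := C) (D := D) (E := E) 1 (by simpa using hs)).hasSum
  have h0 := (summable_pow_t (A := A) (B := B) (C := C) (D := D) (E := E) 0 (by push_cast; linarith)).hasSum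
  refine ((h0.mul_left A).add h1).unique (h.congr_fun fun j => ?_)
  linear_combination t_shift_left (B := B) (C := C) (D := D) (E := E) hA j

/-- After the shift, the second moment reduces to the first two: the difference of the two sides is
the telescoping sum of `V (j + 1) - V j` with `V j = j (A + j) t j → 0`. -/
lemma S_two_eq {A B C D E : ℂ} (hA : Regular A) (hB : Regular B) (hC : Regular C)
    (hs : 1 < (D + E - A - B - C).re) :
    (D + E - A - B - C - 1) * S 2 (A + 1) B C (D + 1) (E + 1) =
      ((A + 1) * (B + C) + B * C - D * E) * S 1 (A + 1) B C (D + 1) (E + 1) +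
      (A + 1) * B * C * S 0 (A + 1) B C (D + 1) (E + 1) := by
  have hs' : 2 < ((D + 1) + (E + 1) - (A + 1) - B - C).re := by
    simp at hs ⊢; linarith
  have h := (hasSum_quadratic hs' (-(D + E - A - B - C - 1))
    ((A + 1) * (B + C) + B * C - D * E) ((A + 1) * B * C)).tendsto_sum_nat
  have hV : ∀ n : ℕ, ∑ j ∈ Finset.range n, (-(D + E - A - B - C - 1) * (j : ℂ) ^ 2 +
      ((A + 1) * (B + C) + B * C - D * E) * j + (A + 1) * B * C) *
        t (A + 1) B C (D + 1) (E + 1) j = n * (A + n) * t A B C D E n := by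
    intro n
    induction n with
    | zero => simp
    | succ n ih =>
      rw [Finset.sum_range_succ, ih]
      push_cast
      linear_combination n * t_shift_left (B := B) (C := C) (D := D) (E := E) hA n -
        (A + 1 + n) * t_shift_right (A := A) (D := D) (E := E) hB hC n
  have hlim : Tendsto (fun n : ℕ => (n : ℂ) * (A + n) * t A B C D E n) atTop (𝓝 0) := by
    have h2 := tendsto_pow_t (A := A) (B := B) (C := C) (D := D) (E := E) 2
      (by push_cast; linarith)
    have h1 := tendsto_pow_t (A := A) (B := B) (C := C) (D := D) (E := E) 1
      (by push_cast; linarith)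
    have := (h1.const_mul A).add h2
    simp only [mul_zero, add_zero] at this
    refine this.congr fun n => ?_
    ring
  simp only [hV] at h
  linear_combination tendsto_nhds_unique hlim h

/-- The moments `S 0`, `S 1` in terms of those at the shifted parameters. -/
lemma contiguity {A B C D E : ℂ} (hA : Regular A) (hB : Regular B) (hC : Regular C)
    (hs : 1 < (D + E - A - B - C).re) :
    A * S 0 A B C D E = (D * E - B * C) * S 0 (A + 1) B C (D + 1) (E + 1) +
        (D + E - B - C) * S 1 (A + 1) B C (D + 1) (E + 1) ∧
    (D + E - A - B - C - 1) * S 1 A B C D E =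
      (D + E - B - C) * B * C * S 0 (A + 1) B C (D + 1) (E + 1) +
      ((D + E - B - C) * (B + C) + B * C - D * E) * S 1 (A + 1) B C (D + 1) (E + 1) := by
  have e0 := S_zero_eq (B := B) (C := C) hA hs
  have e1 := S_one_eq hB hC hs
  have e2 := S_two_eq hA hB hC hs
  constructor
  · linear_combination e0 - e1
  · linear_combination (D + E - A - B - C - 1) * e1 + e2

/-! ### The series is dominated by its first term far along the shift -/

lemma t_succ {A B C D E : ℂ} (hA : Regular A) (hB : Regular B) (hC : Regular C)
    (hD : Regular D) (hE : Regular E) (j : ℕ) :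
    t A B C D E (j + 1) =
      (A + j) * (B + j) * (C + j) / ((1 + j) * (D + j) * (E + j)) * t A B C D E j := by
  have h1 : 1 + (j : ℂ) ≠ 0 := by rw [add_comm]; exact_mod_cast j.succ_ne_zero
  have hl := t_shift_left (B := B) (C := C) (D := D) (E := E) hA j
  have hr := t_shift_right (A := A) (D := D) (E := E) hB hC j
  have hDj := hD j
  have hEj := hE j
  field_simp
  linear_combination (D + j) * (E + j) * hr - (B + j) * (C + j) * hl

lemma regular_of_norm_lt {z : ℂ} {n : ℕ} (h : ‖z‖ < n) : Regular (z + n) := fun j hj => by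
  have h1 : ((n + j : ℕ) : ℂ) = -z := by push_cast; linear_combination hj
  have h2 := congrArg norm h1
  rw [norm_neg, Complex.norm_natCast] at h2
  push_cast at h2
  have : (0 : ℝ) ≤ j := j.cast_nonneg
  linarith

lemma regular_natCast {n : ℕ} (h : 0 < n) : Regular (n : ℂ) := fun j hj => by
  have : n + j = 0 := by exact_mod_cast hj
  omega

/-- Uniform majorant: for `n ≥ N` the normalized summand `t j / t 0` at the `n`-fold shifted parameters
is bounded by that of `₃f₂(N+M,M,M;N-M,N-M)`, where `M` bounds all the parameters. The quotient of
consecutive terms of the former is at most `(n+M+j)(M+j)² / ((1+j)(n-M+j)²)`, which decreases in `n`.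
The inequality is cross-multiplied to avoid division by a leading term that may vanish. -/
lemma norm_t_le {A B C D E : ℂ} {M N : ℕ} (hM : 0 < M) (hMN : M < N)
    (hB : Regular B) (hC : Regular C)
    (nA : ‖A‖ ≤ M) (nB : ‖B‖ ≤ M) (nC : ‖C‖ ≤ M) (nD : ‖D‖ ≤ M) (nE : ‖E‖ ≤ M)
    {n : ℕ} (hn : N ≤ n) (j : ℕ) :
    ‖t (A + n) B C (D + n) (E + n) j‖ *
        ‖t ((N + M : ℕ) : ℂ) M M ((N - M : ℕ) : ℂ) ((N - M : ℕ) : ℂ) 0‖ ≤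
      ‖t (A + n) B C (D + n) (E + n) 0‖ *
        ‖t ((N + M : ℕ) : ℂ) M M ((N - M : ℕ) : ℂ) ((N - M : ℕ) : ℂ) j‖ := by
  have hMn : (M : ℝ) < n := by exact_mod_cast hMN.trans_le hn
  have hMN' : (M : ℝ) < N := by exact_mod_cast hMN
  have hNn : (N : ℝ) ≤ n := by exact_mod_cast hn
  have hM0 : (0 : ℝ) < M := by exact_mod_cast hM
  induction j with
  | zero => exact le_rfl
  | succ j ih =>
    rw [t_succ (regular_of_norm_lt (nA.trans_lt hMn)) hB hC (regular_of_norm_lt (nD.trans_lt hMn))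
      (regular_of_norm_lt (nE.trans_lt hMn)),
      t_succ (regular_natCast (by omega)) (regular_natCast hM) (regular_natCast hM)
      (regular_natCast (by omega)) (regular_natCast (by omega)), norm_mul, norm_mul, mul_assoc,
      mul_left_comm (‖t (A + n) B C (D + n) (E + n) 0‖)]
    refine mul_le_mul ?_ ih (by positivity) (by positivity)
    have hj : (0 : ℝ) ≤ j := j.cast_nonneg
    have up : ∀ z : ℂ, ‖z‖ ≤ M → ‖z + j‖ ≤ M + j := fun z hz => by
      refine (norm_add_le _ _).trans ?_
      rw [Complex.norm_natCast]; linarith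
    have upn : ∀ z : ℂ, ‖z‖ ≤ M → ‖z + n + j‖ ≤ n + M + j := fun z hz => by
      refine (norm_add₃_le).trans ?_
      simp only [Complex.norm_natCast]; linarith
    have lown : ∀ z : ℂ, ‖z‖ ≤ M → n - M + j ≤ ‖z + n + j‖ := fun z hz => by
      have h := norm_sub_le (z + n + j) z
      rw [show z + n + j - z = ((n + j : ℕ) : ℂ) by push_cast; ring, Complex.norm_natCast] at h
      push_cast at h; linarith
    simp only [← Nat.cast_add, norm_div, norm_mul, Complex.norm_natCast]
    have e1 : ‖(1 : ℂ) + j‖ = 1 + j := by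
      rw [show (1 : ℂ) + j = ((1 + j : ℕ) : ℂ) by push_cast; ring, Complex.norm_natCast]; simp
    rw [e1]
    push_cast [Nat.cast_sub hMN.le]
    calc ‖A + n + j‖ * ‖B + j‖ * ‖C + j‖ / ((1 + j) * ‖D + n + j‖ * ‖E + n + j‖)
        ≤ (n + M + j) * (M + j) * (M + j) / ((1 + j) * (n - M + j) * (n - M + j)) := by
          have := lown D nD
          have := lown E nE
          have : (0 : ℝ) < n - M + j := by linarith
          have := upn A nA
          have := up B nB
          have := up C nC
          gcongr
      _ = (n + M + j) / (n - M + j) * (1 / (n - M + j)) * ((M + j) * (M + j) / (1 + j)) := by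
          have : (0 : ℝ) < n - M + j := by linarith
          field_simp
      _ ≤ (N + M + j) / (N - M + j) * (1 / (N - M + j)) * ((M + j) * (M + j) / (1 + j)) := by
          have h1 : (0 : ℝ) < n - M + j := by linarith
          have h2 : (0 : ℝ) < N - M + j := by linarith
          have h3 : ((n : ℝ) + M + j) / (n - M + j) ≤ (N + M + j) / (N - M + j) := by
            rw [div_le_div_iff₀ h1 h2]; nlinarith
          have h4 : 1 / ((n : ℝ) - M + j) ≤ 1 / (N - M + j) :=
            one_div_le_one_div_of_le h2 (by linarith)
          gcongr
      _ = _ := by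
          have : (0 : ℝ) < N - M + j := by linarith
          field_simp

lemma eventually_Gamma_ne (z : ℂ) : ∀ᶠ n : ℕ in atTop, Gamma (z + n) ≠ 0 := by
  filter_upwards [(tendsto_Gamma z).eventually_ne one_ne_zero] with n hn h
  simp [h] at hn

lemma t_zero_ne {A B C D E : ℂ} (hB : Regular B) (hC : Regular C) :
    ∀ᶠ n : ℕ in atTop, t (A + n) B C (D + n) (E + n) 0 ≠ 0 := by
  filter_upwards [eventually_Gamma_ne A, eventually_Gamma_ne D, eventually_Gamma_ne E] with n a d e
  have hB := hB.gamma_ne 0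
  have hC := hC.gamma_ne 0
  simp_all [t]

lemma tendsto_t_div {A B C D E : ℂ} (hB : Regular B) (hC : Regular C) (j : ℕ) :
    Tendsto (fun n : ℕ => t (A + n) B C (D + n) (E + n) j / t (A + n) B C (D + n) (E + n) 0)
      atTop (𝓝 (if j = 0 then 1 else 0)) := by
  induction j with
  | zero =>
    refine tendsto_const_nhds.congr' ?_
    filter_upwards [t_zero_ne (A := A) (D := D) (E := E) hB hC] with n hn
    simp [hn]
  | succ j ih =>
    have hquot : ∀ z w : ℂ, Tendsto (fun n : ℕ => (z + n) / (w + n)) atTop (𝓝 1) := fun z w => by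
      have h1 := (tendsto_nat_div_add z).inv₀ one_ne_zero
      have h2 := h1.mul (tendsto_nat_div_add w)
      simp only [inv_one, mul_one] at h2
      refine h2.congr' ?_
      filter_upwards [eventually_gt_atTop 0] with n hn
      have hn' : (n : ℂ) ≠ 0 := by exact_mod_cast hn.ne'
      rw [inv_div]
      field_simp
    have hinv : Tendsto (fun n : ℕ => (1 : ℂ) / n) atTop (𝓝 0) := tendsto_one_div_atTop_nhds_zero_nat
    have hlim := ((((hquot (A + j) (D + j)).mul ((tendsto_nat_div_add (E + j)).mul hinv)).mul_const
      ((B + j) * (C + j) / (1 + j)))).mul ih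
    simp only [mul_zero, zero_mul] at hlim
    simp only [Nat.succ_ne_zero, if_false]
    refine hlim.congr' ?_
    obtain ⟨M, hM⟩ := exists_nat_gt (max ‖A‖ (max ‖D‖ ‖E‖))
    filter_upwards [eventually_ge_atTop M, eventually_gt_atTop 0] with n hn hn0
    have hn' : (n : ℂ) ≠ 0 := by exact_mod_cast hn0.ne'
    have hMn : (M : ℝ) ≤ n := by exact_mod_cast hn
    simp only [max_lt_iff] at hM
    have hD := regular_of_norm_lt (hM.2.1.trans_le hMn)
    have hE := regular_of_norm_lt (hM.2.2.trans_le hMn)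
    rw [t_succ (regular_of_norm_lt (hM.1.trans_le hMn)) hB hC hD hE]
    have hDj := hD j
    have hEj := hE j
    rw [add_right_comm] at hDj hEj
    rw [add_right_comm A, add_right_comm D, add_right_comm E]
    field_simp

/-- Only the term `j = 0` survives, and it contributes `0 ^ i` to the `i`-th moment. -/
lemma tendsto_S_div {A B C D E : ℂ} (hB : Regular B) (hC : Regular C) (i : ℕ) :
    Tendsto (fun n : ℕ => S i (A + n) B C (D + n) (E + n) / t (A + n) B C (D + n) (E + n) 0)
      atTop (𝓝 (0 ^ i)) := by
  obtain ⟨M, hM⟩ := exists_nat_gt (max ‖A‖ (max ‖B‖ (max ‖C‖ (max ‖D‖ ‖E‖))))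
  simp only [max_lt_iff] at hM
  obtain ⟨nA, nB, nC, nD, nE⟩ := hM
  have hM0 : 0 < M := by exact_mod_cast (norm_nonneg A).trans_lt nA
  -- The majorant has excess `2 (N - M) - (N + 3 M) = N - 5 M`, which must exceed `i`.
  set N : ℕ := 5 * M + i + 1 with hN
  set β : ℕ → ℂ := t ((N + M : ℕ) : ℂ) M M ((N - M : ℕ) : ℂ) ((N - M : ℕ) : ℂ) with hβ
  have hβ0 : 0 < ‖β 0‖ := by
    have h1 := (regular_natCast (n := N + M) (by omega)).gamma_ne 0
    have h2 := (regular_natCast hM0).gamma_ne 0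
    have h3 := (regular_natCast (n := N - M) (by omega)).gamma_ne 0
    rw [norm_pos_iff, hβ, t]
    simp_all
  have hsum : Summable fun j : ℕ => ‖(j : ℂ) ^ i * β j‖ := by
    refine (summable_pow_t i ?_).norm
    rw [Nat.cast_sub (by omega), hN]
    simp
    linarith
  have hlim := tendsto_tsum_of_dominated_convergence
    (f := fun (n j : ℕ) => (j : ℂ) ^ i *
      (t (A + n) B C (D + n) (E + n) j / t (A + n) B C (D + n) (E + n) 0))
    (g := fun j : ℕ => (j : ℂ) ^ i * (if j = 0 then 1 else 0)) (𝓕 := atTop)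
    (hsum.mul_right ‖β 0‖⁻¹) (fun j => (tendsto_t_div hB hC j).const_mul _) (by
      filter_upwards [eventually_ge_atTop N, t_zero_ne (A := A) (D := D) (E := E) hB hC]
        with n hn h0 j
      have h := norm_t_le hM0 (by omega) hB hC nA.le nB.le nC.le nD.le nE.le hn j
      have h0' := norm_pos_iff.2 h0
      rw [norm_mul, norm_mul, norm_div, mul_assoc]
      refine mul_le_mul_of_nonneg_left ?_ (norm_nonneg _)
      rw [← div_eq_mul_inv, div_le_div_iff₀ h0' hβ0]
      rw [mul_comm ‖β j‖]
      exact h)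
  have hg : ∑' j : ℕ, (j : ℂ) ^ i * (if j = 0 then 1 else 0) = 0 ^ i := by
    rw [tsum_eq_single 0 (by intro j hj; simp [hj])]
    simp
  rw [hg] at hlim
  refine hlim.congr fun n => ?_
  rw [S, ← tsum_div_const]
  exact tsum_congr fun j => by rw [mul_div_assoc]

/-! ### The Casoratian, its recurrence and its limit -/

/-- The Casoratian `f(a) g(a + 𝟙) + f(a + 𝟙) g(a)` at `a = (A,B,C;D,E)`, without the exponential
factors, expressed by moments. -/
noncomputable def wr (A B C D E : ℂ) : ℂ :=
  A * S 0 A B C D E * S 0 A (A - D + 1) (A - E + 1) (A - B + 1) (A - C + 1) +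
    S 0 A B C D E * S 1 A (A - D + 1) (A - E + 1) (A - B + 1) (A - C + 1) +
    S 1 A B C D E * S 0 A (A - D + 1) (A - E + 1) (A - B + 1) (A - C + 1)

/-- The Gamma quotient to which `wr` is equal. -/
noncomputable def rhs (A B C D E : ℂ) : ℂ :=
  Gamma A * Gamma B * Gamma C * Gamma (A - D + 1) * Gamma (A - E + 1) *
    Gamma (D + E - A - B - C - 1) /
    (Gamma (D - B) * Gamma (D - C) * Gamma (E - B) * Gamma (E - C))

lemma wr_step {A B C D E : ℂ} (hA : Regular A) (hB : Regular B) (hC : Regular C)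
    (hD : Regular (A - D + 1)) (hE : Regular (A - E + 1))
    (hs : 1 < (D + E - A - B - C).re) :
    A * (D + E - A - B - C - 1) * wr A B C D E =
      (D - B) * (D - C) * (E - B) * (E - C) * wr (A + 1) B C (D + 1) (E + 1) := by
  have hs1 : D + E - A - B - C - 1 ≠ 0 := fun h => by
    have := congrArg Complex.re h
    simp at this hs
    linarith
  have hA0 : A ≠ 0 := by simpa using hA 0
  have hs2 : (A - B + 1) + (A - C + 1) - A - (A - D + 1) - (A - E + 1) = D + E - A - B - C := by
    ring
  obtain ⟨f0, f1⟩ := contiguity hA hB hC hs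
  obtain ⟨g0, g1⟩ := contiguity hA hD hE (by rwa [hs2])
  rw [hs2] at g1
  simp only [wr]
  rw [show A + 1 - (D + 1) + 1 = A - D + 1 by ring, show A + 1 - (E + 1) + 1 = A - E + 1 by ring,
    show A + 1 - B + 1 = A - B + 1 + 1 by ring, show A + 1 - C + 1 = A - C + 1 + 1 by ring]
  generalize S 0 A B C D E = x0 at *
  generalize S 1 A B C D E = x1 at *
  generalize S 0 A (A - D + 1) (A - E + 1) (A - B + 1) (A - C + 1) = y0 at *
  generalize S 1 A (A - D + 1) (A - E + 1) (A - B + 1) (A - C + 1) = y1 at *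
  apply mul_left_cancel₀ hA0
  generalize S 0 (A + 1) B C (D + 1) (E + 1) = u0 at *
  generalize S 1 (A + 1) B C (D + 1) (E + 1) = u1 at *
  generalize S 0 (A + 1) (A - D + 1) (A - E + 1) (A - B + 1 + 1) (A - C + 1 + 1) = v0 at *
  generalize S 1 (A + 1) (A - D + 1) (A - E + 1) (A - B + 1 + 1) (A - C + 1 + 1) = v1 at *
  have hx0 := eq_div_of_mul_eq hA0 ((mul_comm _ _).trans f0)
  have hy0 := eq_div_of_mul_eq hA0 ((mul_comm _ _).trans g0)
  have hx1 := eq_div_of_mul_eq hs1 ((mul_comm _ _).trans f1)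
  have hy1 := eq_div_of_mul_eq hs1 ((mul_comm _ _).trans g1)
  rw [hx0, hy0, hx1, hy1]
  field_simp
  ring

lemma Gamma_rec {z : ℂ} (h : z ≠ 0) : z * Gamma z = Gamma (z + 1) :=
  (Complex.Gamma_add_one z h).symm

lemma rhs_step {A B C D E : ℂ} (hA : A ≠ 0) (hs : D + E - A - B - C - 1 ≠ 0) :
    A * (D + E - A - B - C - 1) * rhs A B C D E =
      (D - B) * (D - C) * (E - B) * (E - C) * rhs (A + 1) B C (D + 1) (E + 1) := by
  simp only [rhs, div_eq_mul_inv, mul_inv]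
  rw [inv_Gamma (D - B), inv_Gamma (D - C), inv_Gamma (E - B), inv_Gamma (E - C),
    Complex.Gamma_add_one A hA,
    show D + 1 + (E + 1) - (A + 1) - B - C - 1 = D + E - A - B - C - 1 + 1 by ring,
    Complex.Gamma_add_one _ hs]
  rw [show A + 1 - (D + 1) + 1 = A - D + 1 by ring, show A + 1 - (E + 1) + 1 = A - E + 1 by ring,
    show D + 1 - B = D - B + 1 by ring, show D + 1 - C = D - C + 1 by ring,
    show E + 1 - B = E - B + 1 by ring, show E + 1 - C = E - C + 1 by ring]
  ring

/-- The `j = 0` terms of the two series give the leading behaviour of `wr`, which is that of `rhs`. -/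
lemma tendsto_leading_div_rhs {A B C D E : ℂ} (hA : Regular A) (hB : Regular B) (hC : Regular C)
    (hD : Regular (A - D + 1)) (hE : Regular (A - E + 1)) :
    Tendsto (fun n : ℕ => (A + n) * t (A + n) B C (D + n) (E + n) 0 *
      t (A + n) (A - D + 1) (A - E + 1) (A - B + 1 + n) (A - C + 1 + n) 0 /
      rhs (A + n) B C (D + n) (E + n)) atTop (𝓝 1) := by
  have h := (((((tendsto_Gamma (A + 1)).mul (tendsto_Gamma (D - B))).mul
    (tendsto_Gamma (D - C))).mul (tendsto_Gamma (E - B))).mul (tendsto_Gamma (E - C))).div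
    (((((tendsto_Gamma D).mul (tendsto_Gamma E)).mul
    (tendsto_Gamma (A - B + 1))).mul (tendsto_Gamma (A - C + 1))).mul
    (tendsto_Gamma (D + E - A - B - C - 1))) (by norm_num)
  rw [show (1 * 1 * 1 * 1 * 1 / (1 * 1 * 1 * 1 * 1) : ℂ) = 1 by norm_num] at h
  refine h.congr' ?_
  filter_upwards [eventually_gt_atTop 0, eventually_Gamma_ne D, eventually_Gamma_ne E,
    eventually_Gamma_ne (A - B + 1), eventually_Gamma_ne (A - C + 1),
    eventually_Gamma_ne (D + E - A - B - C - 1)] with n hn h1 h2 h3 h4 h5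
  have hn' : (n : ℂ) ≠ 0 := by exact_mod_cast hn.ne'
  have hf : (n.factorial : ℂ) ≠ 0 := by exact_mod_cast n.factorial_ne_zero
  have hp : ∀ z : ℂ, (n : ℂ) ^ z ≠ 0 := fun z => by simp [Complex.cpow_eq_zero_iff, hn']
  -- Five Gamma factors on each side, with equal sums of arguments: the powers of `n` cancel.
  have hpow : (n : ℂ) ^ (A + 1 - 1) * (n : ℂ) ^ (D - B - 1) * (n : ℂ) ^ (D - C - 1) *
      (n : ℂ) ^ (E - B - 1) * (n : ℂ) ^ (E - C - 1) =
      (n : ℂ) ^ (D - 1) * (n : ℂ) ^ (E - 1) * (n : ℂ) ^ (A - B + 1 - 1) *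
      (n : ℂ) ^ (A - C + 1 - 1) * (n : ℂ) ^ (D + E - A - B - C - 1 - 1) := by
    simp only [← Complex.cpow_add _ _ hn']
    congr 1; ring
  simp only [Pi.div_apply, div_mul_div_comm]
  rw [show A + 1 + (n : ℂ) = A + n + 1 by ring, ← Gamma_rec (hA n)]
  simp only [t, rhs, Nat.cast_zero, add_zero, Complex.Gamma_one, one_mul]
  rw [show A + n - (D + n) + 1 = A - D + 1 by ring, show A + n - (E + n) + 1 = A - E + 1 by ring,
    show D + n + (E + n) - (A + n) - B - C - 1 = D + E - A - B - C - 1 + n by ring,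
    show D + n - B = D - B + n by ring, show D + n - C = D - C + n by ring,
    show E + n - B = E - B + n by ring, show E + n - C = E - C + n by ring]
  have hA' := hA.gamma_ne n
  have hB' : Gamma B ≠ 0 := by simpa using hB.gamma_ne 0
  have hC' : Gamma C ≠ 0 := by simpa using hC.gamma_ne 0
  have hD' : Gamma (A - D + 1) ≠ 0 := by simpa using hD.gamma_ne 0
  have hE' : Gamma (A - E + 1) ≠ 0 := by simpa using hE.gamma_ne 0
  have hfac : ∀ p q F P Q : ℂ, F ≠ 0 → P ≠ 0 → P = Q → p / (F * P) / (q / (F * Q)) = p / q := by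
    intro p q F P Q hF hP hPQ
    subst hPQ
    field_simp
  have hP := mul_ne_zero (mul_ne_zero (mul_ne_zero (mul_ne_zero (hp (A + 1 - 1)) (hp (D - B - 1)))
    (hp (D - C - 1))) (hp (E - B - 1))) (hp (E - C - 1))
  trans ((A + n) * Gamma (A + n) * Gamma (D - B + n) * Gamma (D - C + n) * Gamma (E - B + n) *
    Gamma (E - C + n)) / (Gamma (D + n) * Gamma (E + n) * Gamma (A - B + 1 + n) *
    Gamma (A - C + 1 + n) * Gamma (D + E - A - B - C - 1 + n))
  · refine Eq.trans ?_ (hfac _ _ ((n.factorial : ℂ) ^ 5) _ _ (pow_ne_zero _ hf) hP hpow)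
    congr 2 <;> ring
  · field_simp

lemma wr_eq_rhs {A B C D E : ℂ} (hA : Regular A) (hB : Regular B) (hC : Regular C)
    (hD : Regular (A - D + 1)) (hE : Regular (A - E + 1))
    (hs : 1 < (D + E - A - B - C).re) : wr A B C D E = rhs A B C D E := by
  set W : ℕ → ℂ := fun n => wr (A + n) B C (D + n) (E + n) with hW
  set R : ℕ → ℂ := fun n => rhs (A + n) B C (D + n) (E + n) with hR
  -- The factor `c` is the common product of recurrence coefficients; it is zero for large `n` if some
  -- `bᵢ - aⱼ` is a non-positive integer, so it must not be divided by.
  have hiter : ∀ n, ∃ c : ℂ, W 0 = c * W n ∧ R 0 = c * R n := by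
    intro n
    induction n with
    | zero => exact ⟨1, by ring, by ring⟩
    | succ n ih =>
      have hn : (0 : ℝ) ≤ n := n.cast_nonneg
      have hsn : 1 < (D + n + (E + n) - (A + n) - B - C).re := by
        simp at hs ⊢; linarith
      have hs1 : D + n + (E + n) - (A + n) - B - C - 1 ≠ 0 := fun h => by
        have := congrArg Complex.re h
        simp at this hsn
        linarith
      have w := wr_step (hA.shift n) hB hC
        (by rwa [show A + n - (D + n) + 1 = A - D + 1 by ring])
        (by rwa [show A + n - (E + n) + 1 = A - E + 1 by ring]) hsn
      have r := rhs_step (hA n) hs1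
      obtain ⟨c, hcW, hcR⟩ := ih
      have hx := mul_ne_zero (hA n) hs1
      have eW : W (n + 1) = wr (A + n + 1) B C (D + n + 1) (E + n + 1) := by
        simp only [hW]; push_cast; simp only [add_assoc]
      have eR : R (n + 1) = rhs (A + n + 1) B C (D + n + 1) (E + n + 1) := by
        simp only [hR]; push_cast; simp only [add_assoc]
      rw [← eW, mul_comm] at w
      rw [← eR, mul_comm] at r
      have w' : W n = _ := eq_div_of_mul_eq hx w
      have r' : R n = _ := eq_div_of_mul_eq hx r
      refine ⟨c * ((D + n - B) * (D + n - C) * (E + n - B) * (E + n - C) /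
        ((A + n) * (D + n + (E + n) - (A + n) - B - C - 1))), ?_, ?_⟩
      · rw [hcW, w']; ring
      · rw [hcR, r']; ring
  have hcross : ∀ n, W 0 * R n = R 0 * W n := fun n => by
    obtain ⟨c, hcW, hcR⟩ := hiter n
    rw [hcW, hcR]; ring
  have hlim : Tendsto (fun n => W n / R n) atTop (𝓝 1) := by
    have hinv : Tendsto (fun n : ℕ => (A + n)⁻¹) atTop (𝓝 0) := by
      have h := (tendsto_nat_div_add A).mul (tendsto_one_div_atTop_nhds_zero_nat (𝕜 := ℂ))
      rw [mul_zero] at h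
      refine h.congr' ?_
      filter_upwards [eventually_gt_atTop 0] with n hn
      have hn' : (n : ℂ) ≠ 0 := by exact_mod_cast hn.ne'
      field_simp
    have f0 := tendsto_S_div (A := A) (D := D) (E := E) hB hC 0
    have f1 := tendsto_S_div (A := A) (D := D) (E := E) hB hC 1
    have g0 := tendsto_S_div (A := A) (D := A - B + 1) (E := A - C + 1) hD hE 0
    have g1 := tendsto_S_div (A := A) (D := A - B + 1) (E := A - C + 1) hD hE 1
    have h := (tendsto_leading_div_rhs hA hB hC hD hE).mul
      ((f0.mul g0).add (((f0.mul g1).add (f1.mul g0)).mul hinv))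
    simp only [pow_zero, pow_one, mul_zero, mul_one, add_zero] at h
    refine h.congr' ?_
    filter_upwards [t_zero_ne (A := A) (D := D) (E := E) hB hC,
      t_zero_ne (A := A) (D := A - B + 1) (E := A - C + 1) hD hE] with n hf hg
    have hAn := hA n
    simp only [hW, hR, wr]
    rw [show A + n - (D + n) + 1 = A - D + 1 by ring, show A + n - (E + n) + 1 = A - E + 1 by ring,
      show A + n - B + 1 = A - B + 1 + n by ring, show A + n - C + 1 = A - C + 1 + n by ring]
    generalize rhs (A + n) B C (D + n) (E + n) = r
    field_simp
    ring
  have hconst : Tendsto (fun n => R 0 * (W n / R n)) atTop (𝓝 (W 0)) := by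
    refine tendsto_const_nhds.congr' ?_
    filter_upwards [hlim.eventually_ne one_ne_zero] with n hn
    have : R n ≠ 0 := fun h => hn (by simp [h])
    rw [← mul_div_assoc, ← hcross, mul_div_cancel_right₀ _ this]
  have := tendsto_nhds_unique hconst (hlim.const_mul (R 0))
  simpa [hW, hR] using this

/-! ### Shifted series as moments -/

lemma threeF2_eq (A B C D E : ℂ) : threeF2 A B C D E = S 0 A B C D E := by
  simp only [threeF2, S, t, pow_zero, one_mul]

lemma threeF2_add_one {A B C D E : ℂ} (hs : 1 < (D + E - A - B - C).re) :
    threeF2 (A + 1) (B + 1) (C + 1) (D + 1) (E + 1) = S 1 A B C D E := by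
  rw [S, (summable_pow_t 1 (by simpa using hs)).tsum_eq_zero_add, threeF2]
  simp only [Nat.cast_zero, pow_one, zero_mul, zero_add]
  refine tsum_congr fun j => ?_
  simp only [t, div_eq_mul_inv, mul_inv]
  push_cast
  rw [inv_Gamma (1 + j), add_right_comm A, add_right_comm B, add_right_comm C,
    add_right_comm D, add_right_comm E]
  simp only [← add_assoc]
  ring

lemma threeF2_add_one_left {A B C D E : ℂ} (hA : Regular A) (hs : 1 < (D + E - A - B - C).re) :
    threeF2 (A + 1) B C D E = A * S 0 A B C D E + S 1 A B C D E := by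
  have h1 := (summable_pow_t (A := A) (B := B) (C := C) (D := D) (E := E) 1
    (by simpa using hs)).hasSum
  have h0 := (summable_pow_t (A := A) (B := B) (C := C) (D := D) (E := E) 0
    (by push_cast; linarith)).hasSum
  refine Eq.trans (tsum_congr fun j => ?_) ((h0.mul_left A).add h1).tsum_eq
  rw [add_right_comm, Complex.Gamma_add_one _ (hA j), t]
  ring

lemma regular_of_int {z : ℂ} (h : ∀ k : ℤ, k ≤ 0 → z ≠ (k : ℂ)) : Regular z := fun j hj =>
  h (-j) (by omega) (by push_cast; linear_combination hj)

end ThreeF2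

open ThreeF2

/-- For `a = (a₀,a₁,a₂;b₁,b₂)` with `Re s(a) > 1` and
`a₀, a₁, a₂, a₀−b₁+1, a₀−b₂+1 ∉ ℤ≤0`, with `y⁰(a) := ₃f₂(a)` and
`y^∞(a) := e^{iπ s(a)}·₃g₂(a)` (and `s(a+𝟙) = s(a) − 1`),
`W(a) = y⁰(a)·y^∞(a+𝟙) − y⁰(a+𝟙)·y^∞(a)
  = −e^{iπ s(a)}·Γ(a₀)Γ(a₁)Γ(a₂)Γ(a₀−b₁+1)Γ(a₀−b₂+1)Γ(s(a)−1) /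
      (Γ(b₁−a₁)Γ(b₁−a₂)Γ(b₂−a₁)Γ(b₂−a₂))`. -/
theorem casoratian_value (a0 a1 a2 b1 b2 : ℂ)
    (hs : 1 < (b1 + b2 - a0 - a1 - a2).re)
    (h0 : ∀ k : ℤ, k ≤ 0 → a0 ≠ (k : ℂ))
    (h1 : ∀ k : ℤ, k ≤ 0 → a1 ≠ (k : ℂ))
    (h2 : ∀ k : ℤ, k ≤ 0 → a2 ≠ (k : ℂ))
    (h3 : ∀ k : ℤ, k ≤ 0 → a0 - b1 + 1 ≠ (k : ℂ))
    (h4 : ∀ k : ℤ, k ≤ 0 → a0 - b2 + 1 ≠ (k : ℂ)) :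
    threeF2 a0 a1 a2 b1 b2 *
        (Complex.exp (Real.pi * I * (b1 + b2 - a0 - a1 - a2 - 1)) *
          threeG2 (a0 + 1) (a1 + 1) (a2 + 1) (b1 + 1) (b2 + 1)) -
      threeF2 (a0 + 1) (a1 + 1) (a2 + 1) (b1 + 1) (b2 + 1) *
        (Complex.exp (Real.pi * I * (b1 + b2 - a0 - a1 - a2)) *
          threeG2 a0 a1 a2 b1 b2) =
    -Complex.exp (Real.pi * I * (b1 + b2 - a0 - a1 - a2)) *
        (Gamma a0 * Gamma a1 * Gamma a2 * Gamma (a0 - b1 + 1) * Gamma (a0 - b2 + 1) *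
          Gamma (b1 + b2 - a0 - a1 - a2 - 1)) /
      (Gamma (b1 - a1) * Gamma (b1 - a2) * Gamma (b2 - a1) * Gamma (b2 - a2)) := by
  have hA := regular_of_int h0
  have hs' : 1 < ((a0 - a1 + 1) + (a0 - a2 + 1) - a0 - (a0 - b1 + 1) - (a0 - b2 + 1)).re := by
    rwa [show (a0 - a1 + 1) + (a0 - a2 + 1) - a0 - (a0 - b1 + 1) - (a0 - b2 + 1) =
      b1 + b2 - a0 - a1 - a2 by ring]
  have key := wr_eq_rhs hA (regular_of_int h1) (regular_of_int h2) (regular_of_int h3)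
    (regular_of_int h4) hs
  have hexp : Complex.exp (Real.pi * I * (b1 + b2 - a0 - a1 - a2 - 1)) =
      -Complex.exp (Real.pi * I * (b1 + b2 - a0 - a1 - a2)) := by
    rw [mul_sub, mul_one, Complex.exp_sub, Complex.exp_pi_mul_I]
    ring
  rw [hexp, threeF2_add_one hs, threeG2, threeG2, add_sub_add_right_eq_sub,
    add_sub_add_right_eq_sub, add_sub_add_right_eq_sub, add_sub_add_right_eq_sub,
    threeF2_add_one_left hA hs', threeF2_eq, threeF2_eq, mul_div_assoc]
  rw [wr, rhs] at key
  linear_combination -Complex.exp (Real.pi * I * (b1 + b2 - a0 - a1 - a2)) * key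
end

section
/- Let q : ℤ≥0 → ℂ and r : ℤ≥0 → ℂ with r(0) = 1 and r(n) ≠ 0 for all n ≥ 1, and suppose X, Y : ℤ≥0 → ℂ both satisfy the recurrence x(n) = q(n)·x(n+1) + r(n+1)·x(n+2) for all n ≥ 0. Fix m ∈ ℤ≥0 and set R(m) := X(m+2)/Y(m+2) and ω(0) := X(0)·Y(1) − X(1)·Y(0). If Y(m+2) ≠ 0, X(0) ≠ 0, X(0) − R(m)·Y(0) ≠ 0, and the finite continued fraction K_{j=0}^{m} r(j)/q(j) := r(0)/(q(0) + r(1)/(q(1) + ⋯ + r(m)/q(m))) is well defined (no division by zero occurs in its evaluation), then X(1)/X(0) − K_{j=0}^{m} r(j)/q(j) = ω(0)·R(m) / (X(0)·(X(0) − R(m)·Y(0))). In particular, if moreover R(m) → 0 as m → ∞, then X(1)/X(0) − K_{j=0}^{n} r(j)/q(j) = (ω(0)·R(n)/X(0)²)·(1 + O(R(n))) as n → ∞. -/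
/-!
For fixed `m` put `R = X (m + 2) / Y (m + 2)` and `Z n = X n - R * Y n`. Then `Z` solves the same
recurrence and `Z (m + 2) = 0`, so evaluating the continued fraction from the bottom up gives
`K = Z 1 / Z 0` (`cfFrom_mul_of_recurrence`, Pincherle's argument for a finite fraction).
Subtracting this from `X 1 / X 0` leaves the Casoratian `X 0 * Y 1 - X 1 * Y 0` times `R` over
`X 0 * Z 0`. The asymptotic form has relative error exactly `E = R * Y 0 / (X 0 - R * Y 0)`, whose
denominator is eventually at least `‖X 0‖ / 2` in norm because `R → 0`.
-/


/-- `cfFrom q r j t` is the finite continued fraction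
`r(j)/(q(j) + r(j+1)/(q(j+1) + ⋯ + r(j+t)/q(j+t)))`. -/
noncomputable def cfFrom (q r : ℕ → ℂ) : ℕ → ℕ → ℂ
  | j, 0 => r j / q j
  | j, t + 1 => r j / (q j + cfFrom q r (j + 1) t)

/-- The continued fraction `K_{j=0}^{m} r(j)/q(j)` is well defined: no division by
zero occurs in its bottom-up evaluation. -/
def cfWellDef (q r : ℕ → ℂ) (m : ℕ) : Prop :=
  q m ≠ 0 ∧ ∀ j : ℕ, j < m → q j + cfFrom q r (j + 1) (m - (j + 1)) ≠ 0

/-- A solution `Z` of the recurrence with `Z (m + 2) = 0` is carried along by the tails of the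
continued fraction: the tail starting at `j` is `r j * Z (j + 1) / Z j`. The relation is stated
without division, so that `Z` is allowed to vanish. -/
theorem cfFrom_mul_of_recurrence (q r Z : ℕ → ℂ) (m : ℕ)
    (hZ : ∀ n : ℕ, Z n = q n * Z (n + 1) + r (n + 1) * Z (n + 2))
    (h0 : Z (m + 2) = 0) (hw : cfWellDef q r m) :
    ∀ t j : ℕ, j + t = m → cfFrom q r j t * Z j = r j * Z (j + 1) := by
  intro t
  induction t with
  | zero =>
    rintro j rfl
    have hq : q j ≠ 0 := hw.1
    have h0' : Z (j + 2) = 0 := h0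
    rw [cfFrom, hZ j, h0']
    field_simp
    ring
  | succ t ih =>
    intro j hj
    have h1 := ih (j + 1) (by omega)
    have h2 := hw.2 j (by omega)
    rw [show m - (j + 1) = t by omega] at h2
    have h3 : Z j = (q j + cfFrom q r (j + 1) t) * Z (j + 1) := by
      rw [hZ j, add_mul, h1]
    rw [cfFrom, h3, ← mul_assoc, div_mul_cancel₀ _ h2]

/-- Let `q, r : ℤ≥0 → ℂ` with `r(0) = 1` and `r(n) ≠ 0` for `n ≥ 1`,
and let `X, Y` both solve `x(n) = q(n)x(n+1) + r(n+1)x(n+2)`.  With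
`R(m) := X(m+2)/Y(m+2)` and `ω(0) := X(0)Y(1) − X(1)Y(0)`:
(1) for each `m`, if `Y(m+2) ≠ 0`, `X(0) ≠ 0`, `X(0) − R(m)Y(0) ≠ 0` and the finite
continued fraction `K_{j=0}^{m} r(j)/q(j)` is well defined, then
`X(1)/X(0) − K_{j=0}^{m} r(j)/q(j) = ω(0)R(m)/(X(0)(X(0) − R(m)Y(0)))`;
(2) if these conditions hold for all `m` and moreover `R(m) → 0`, then
`X(1)/X(0) − K_{j=0}^{n} r(j)/q(j) = (ω(0)R(n)/X(0)²)(1 + O(R(n)))` as `n → ∞`. -/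
theorem cf_error_identity (q r X Y : ℕ → ℂ)
    (hr0 : r 0 = 1) (hr : ∀ n : ℕ, 1 ≤ n → r n ≠ 0)
    (hX : ∀ n : ℕ, X n = q n * X (n + 1) + r (n + 1) * X (n + 2))
    (hY : ∀ n : ℕ, Y n = q n * Y (n + 1) + r (n + 1) * Y (n + 2)) :
    (∀ m : ℕ, Y (m + 2) ≠ 0 → X 0 ≠ 0 →
      X 0 - X (m + 2) / Y (m + 2) * Y 0 ≠ 0 → cfWellDef q r m →
      X 1 / X 0 - cfFrom q r 0 m =
        (X 0 * Y 1 - X 1 * Y 0) * (X (m + 2) / Y (m + 2)) /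
          (X 0 * (X 0 - X (m + 2) / Y (m + 2) * Y 0))) ∧
    ((∀ m : ℕ, Y (m + 2) ≠ 0) → X 0 ≠ 0 →
      (∀ m : ℕ, X 0 - X (m + 2) / Y (m + 2) * Y 0 ≠ 0) →
      (∀ m : ℕ, cfWellDef q r m) →
      Filter.Tendsto (fun m : ℕ => X (m + 2) / Y (m + 2)) Filter.atTop (nhds 0) →
      ∃ K : ℝ, 0 < K ∧ ∃ N : ℕ, ∀ n : ℕ, N ≤ n → ∃ E : ℂ,
        X 1 / X 0 - cfFrom q r 0 n =
          (X 0 * Y 1 - X 1 * Y 0) * (X (n + 2) / Y (n + 2)) / (X 0) ^ 2 * (1 + E) ∧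
        ‖E‖ ≤ K * ‖X (n + 2) / Y (n + 2)‖) := by
  have main : ∀ m : ℕ, Y (m + 2) ≠ 0 → X 0 ≠ 0 →
      X 0 - X (m + 2) / Y (m + 2) * Y 0 ≠ 0 → cfWellDef q r m →
      X 1 / X 0 - cfFrom q r 0 m =
        (X 0 * Y 1 - X 1 * Y 0) * (X (m + 2) / Y (m + 2)) /
          (X 0 * (X 0 - X (m + 2) / Y (m + 2) * Y 0)) := by
    intro m hYm hX0 hZ0 hw
    have hend : X (m + 2) - X (m + 2) / Y (m + 2) * Y (m + 2) = 0 := by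
      rw [div_mul_cancel₀ _ hYm, sub_self]
    generalize X (m + 2) / Y (m + 2) = R at *
    have h := cfFrom_mul_of_recurrence q r (fun n => X n - R * Y n) m
      (fun n => by linear_combination hX n - R * hY n) hend hw m 0 (Nat.zero_add m)
    simp only [hr0, one_mul, zero_add] at h
    rw [eq_div_of_mul_eq hZ0 h, div_sub_div _ _ hX0 hZ0]
    congr 1
    ring
  refine ⟨main, fun hYn hX0 hZ0 hw hR => ?_⟩
  have hlim : Filter.Tendsto (fun m : ℕ => ‖X 0 - X (m + 2) / Y (m + 2) * Y 0‖)
      Filter.atTop (nhds ‖X 0‖) := by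
    simpa using ((hR.mul_const (Y 0)).const_sub (X 0)).norm
  have hpos : 0 < ‖X 0‖ := norm_pos_iff.mpr hX0
  obtain ⟨N, hN⟩ := Filter.eventually_atTop.mp
    (hlim.eventually_const_lt (half_lt_self hpos))
  -- The summand `1` only serves to keep the constant positive when `Y 0 = 0`.
  refine ⟨‖Y 0‖ / (‖X 0‖ / 2) + 1, by positivity, N, fun n hn =>
    ⟨X (n + 2) / Y (n + 2) * Y 0 / (X 0 - X (n + 2) / Y (n + 2) * Y 0), ?_, ?_⟩⟩
  · rw [main n (hYn n) hX0 (hZ0 n) (hw n)]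
    have hz := hZ0 n
    generalize X (n + 2) / Y (n + 2) = R at *
    rw [one_add_div hz, sub_add_cancel]
    field_simp
  · have hlow := hN n hn
    generalize X (n + 2) / Y (n + 2) = R at *
    rw [norm_div, norm_mul]
    calc ‖R‖ * ‖Y 0‖ / ‖X 0 - R * Y 0‖ ≤ ‖R‖ * ‖Y 0‖ / (‖X 0‖ / 2) := by gcongr
      _ = ‖Y 0‖ / (‖X 0‖ / 2) * ‖R‖ := by ring
      _ ≤ (‖Y 0‖ / (‖X 0‖ / 2) + 1) * ‖R‖ := by gcongr; linarith
end
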